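/- Let N be a positive integer, R > 0, a₁, α₁, a₂, α₂, σ₁, σ₂, M₁, M₂ > 0, and let f₁, f₂ : ℝᴺ → ℝ be continuous convex functions with 0 ≤ fᵢ(x) ≤ Mᵢ‖x‖². Let K₁, K₂ ∈ (−∞, 0) satisfy 4K₁² + (2(a₁+α₁)σ₁²/σ₁⁴)K₁ − M₁/σ₁⁴ − (2a₁σ₂²/σ₁⁴)K₂ = 0, 4K₂² + (2(a₂+α₂)σ₂²/σ₂⁴)K₂ − M₂/σ₂⁴ − (2a₂σ₁²/σ₂⁴)K₁ = 0, −(2(a₁+α₁)R²/σ₁²)K₁ − 2K₁N + (2a₁σ₂²R²/σ₁⁴)K₂ ≥ 0, and −(2(a₂+α₂)R²/σ₂²)K₂ − 2NK₂ + (2a₂σ₁²R²/σ₂⁴)K₁ ≥ 0. Then there exists a pair (u₁, u₂) of functions, twice continuously differentiable on the open ball B_R ⊂ ℝᴺ and continuous on the closed ball, satisfying Δu₁(x) = u₁(x)[f₁(x)/σ₁⁴ + (2(a₁+α₁)/σ₁²)ln u₁(x) − (2a₁σ₂²/σ₁⁴)ln u₂(x)] and Δu₂(x) = u₂(x)[f₂(x)/σ₂⁴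 + (2(a₂+α₂)/σ₂²)ln u₂(x) − (2a₂σ₁²/σ₂⁴)ln u₁(x)] for x ∈ B_R, with u₁ = u₂ = 1 on ∂B_R, and such that exp(K₁(R² − ‖x‖²)) ≤ u₁(x) ≤ 1 and exp(K₂(R² − ‖x‖²)) ≤ u₂(x) ≤ 1 for all x in the closed ball. -/

import Mathlib

open Metric

/-- The Laplacian of `f : ℝᴺ → ℝ`: the sum of the second-order partial derivatives. -/
noncomputable def laplacian {N : ℕ} (f : EuclideanSpace ℝ (Fin N) → ℝ)
    (x : EuclideanSpace ℝ (Fin N)) : ℝ :=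
  ∑ i : Fin N,
    fderiv ℝ (fun y => fderiv ℝ f y (EuclideanSpace.single i 1)) x (EuclideanSpace.single i 1)

section

namespace TS

lemma diff_fd {N : ℕ} {p : EuclideanSpace ℝ (Fin N) → ℝ} (hp : ContDiff ℝ 2 p)
    (e : EuclideanSpace ℝ (Fin N)) : ContDiff ℝ 1 (fun y => fderiv ℝ p y e) :=
  (hp.fderiv_right (m := 1) (by norm_num)).clm_apply contDiff_const

lemma lap_comb {N : ℕ} {p q : EuclideanSpace ℝ (Fin N) → ℝ} (hp : ContDiff ℝ 2 p)
    (hq : ContDiff ℝ 2 q) (c d : ℝ) (x : EuclideanSpace ℝ (Fin N)) :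
    laplacian (fun y => c * p y + d * q y) x = c * laplacian p x + d * laplacian q x := by
  unfold laplacian
  rw [Finset.mul_sum, Finset.mul_sum, ← Finset.sum_add_distrib]
  refine Finset.sum_congr rfl fun i _ => ?_
  have h1 : (fun y => fderiv ℝ (fun y => c * p y + d * q y) y (EuclideanSpace.single i 1)) =
      fun y => c * fderiv ℝ p y (EuclideanSpace.single i 1)
        + d * fderiv ℝ q y (EuclideanSpace.single i 1) := by
    ext y
    have := ((hp.differentiable (by norm_num) y).hasFDerivAt.const_mul c).fun_add
      ((hq.differentiable (by norm_num) y).hasFDerivAt.const_mul d)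
    rw [this.fderiv]; simp
  rw [h1]
  have := (((diff_fd hp (EuclideanSpace.single i 1)).differentiable
    (by norm_num) x).hasFDerivAt.const_mul c).fun_add
    (((diff_fd hq (EuclideanSpace.single i 1)).differentiable
    (by norm_num) x).hasFDerivAt.const_mul d)
  rw [this.fderiv]; simp

lemma lap_cont {N : ℕ} {p : EuclideanSpace ℝ (Fin N) → ℝ} (hp : ContDiff ℝ 2 p) :
    Continuous (laplacian p) := by
  unfold laplacian
  refine continuous_finsetSum _ fun i _ => ?_
  exact ((diff_fd hp _).continuous_fderiv (by norm_num)).clm_apply continuous_const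

lemma lap_congr {N : ℕ} {p q : EuclideanSpace ℝ (Fin N) → ℝ} {x : EuclideanSpace ℝ (Fin N)}
    (h : p =ᶠ[nhds x] q) : laplacian p x = laplacian q x := by
  unfold laplacian
  refine Finset.sum_congr rfl fun i _ => ?_
  have : (fun y => fderiv ℝ p y (EuclideanSpace.single i 1)) =ᶠ[nhds x]
      (fun y => fderiv ℝ q y (EuclideanSpace.single i 1)) := by
    filter_upwards [h.fderiv (𝕜 := ℝ)] with y hy
    rw [hy]
  rw [this.fderiv_eq]

lemma lap_max {N : ℕ} {p : EuclideanSpace ℝ (Fin N) → ℝ} (hp : ContDiff ℝ 2 p)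
    {x : EuclideanSpace ℝ (Fin N)} (h : IsLocalMax p x) : laplacian p x ≤ 0 := by
  unfold laplacian
  refine Finset.sum_nonpos fun i _ => ?_
  set e : EuclideanSpace ℝ (Fin N) := EuclideanSpace.single i 1
  by_contra hc
  push Not at hc
  set g : ℝ → ℝ := fun t => p (x + t • e)
  have hline : ∀ t : ℝ, HasDerivAt (fun t : ℝ => x + t • e) e t := fun t => by
    simpa using ((hasDerivAt_id t).smul_const e).const_add x
  have hg : ∀ t, HasDerivAt g (fderiv ℝ p (x + t • e) e) t := fun t =>
    (hp.differentiable (by norm_num) _).hasFDerivAt.comp_hasDerivAt t (hline t)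
  have hd : deriv g = fun t => fderiv ℝ p (x + t • e) e := funext fun t => (hg t).deriv
  have hdd : deriv (deriv g) 0 = fderiv ℝ (fun y => fderiv ℝ p y e) x e := by
    rw [hd]
    have := (((diff_fd hp e).differentiable (by norm_num) (x + (0:ℝ) • e)).hasFDerivAt).comp_hasDerivAt
      (0:ℝ) (hline 0)
    have h2 := this.deriv
    simp only [zero_smul, add_zero] at h2
    exact h2
  have hmax : IsLocalMax g 0 := by
    have hc : ContinuousAt (fun t : ℝ => x + t • e) 0 := (hline 0).continuousAt
    have h' : IsLocalMax p (x + (0:ℝ) • e) := by simpa using h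
    exact IsLocalMax.comp_continuous (g := fun t : ℝ => x + t • e) h' hc
  have hmin : IsLocalMin g 0 := by
    refine isLocalMin_of_deriv_deriv_pos (by rw [hdd]; exact hc) hmax.deriv_eq_zero
      (hg 0).continuousAt
  have hconst : g =ᶠ[nhds 0] fun _ => g 0 := by
    filter_upwards [hmax, hmin] with t h1 h2
    exact le_antisymm h1 h2
  have h3 : deriv g =ᶠ[nhds 0] fun _ => 0 := by
    have := hconst.deriv
    simpa using this
  have h4 := h3.deriv_eq
  rw [hdd] at h4
  simp at h4
  linarith

lemma hasFDerivAt_normsq {N : ℕ} (x : EuclideanSpace ℝ (Fin N)) :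
    HasFDerivAt (fun y : EuclideanSpace ℝ (Fin N) => ‖y‖ ^ 2) (2 • (innerSL ℝ x)) x :=
  (hasStrictFDerivAt_norm_sq x).hasFDerivAt

lemma hasFDerivAt_coord {N : ℕ} (x : EuclideanSpace ℝ (Fin N)) (i : Fin N) :
    HasFDerivAt (fun y : EuclideanSpace ℝ (Fin N) => y i)
      (EuclideanSpace.proj i : EuclideanSpace ℝ (Fin N) →L[ℝ] ℝ) x :=
  (EuclideanSpace.proj i : EuclideanSpace ℝ (Fin N) →L[ℝ] ℝ).hasFDerivAt

lemma normsq_eq {N : ℕ} (x : EuclideanSpace ℝ (Fin N)) : ‖x‖ ^ 2 = ∑ i, x i ^ 2 := by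
  rw [EuclideanSpace.norm_sq_eq]; simp

lemma lap_normsq {N : ℕ} (x : EuclideanSpace ℝ (Fin N)) :
    laplacian (fun y : EuclideanSpace ℝ (Fin N) => ‖y‖ ^ 2) x = 2 * N := by
  unfold laplacian
  have : ∀ i : Fin N, (fun y : EuclideanSpace ℝ (Fin N) =>
      fderiv ℝ (fun y : EuclideanSpace ℝ (Fin N) => ‖y‖ ^ 2) y (EuclideanSpace.single i 1))
      = fun y => 2 * y i := by
    intro i; ext y
    rw [(hasFDerivAt_normsq y).fderiv]; simp [EuclideanSpace.inner_single_right]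
  simp_rw [this]
  have h2 : ∀ i : Fin N, fderiv ℝ (fun y : EuclideanSpace ℝ (Fin N) => 2 * y i) x
      (EuclideanSpace.single i 1) = 2 := by
    intro i
    rw [((hasFDerivAt_coord x i).const_mul 2).fderiv]; simp
  simp [h2, mul_comm]

lemma contDiff_expq {N : ℕ} (K R : ℝ) : ContDiff ℝ 2
    (fun y : EuclideanSpace ℝ (Fin N) => Real.exp (K * (R ^ 2 - ‖y‖ ^ 2))) :=
  Real.contDiff_exp.comp (contDiff_const.mul (contDiff_const.sub (contDiff_norm_sq ℝ)))

lemma lap_exp {N : ℕ} (K R : ℝ) (x : EuclideanSpace ℝ (Fin N)) :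
    laplacian (fun y : EuclideanSpace ℝ (Fin N) => Real.exp (K * (R ^ 2 - ‖y‖ ^ 2))) x =
      Real.exp (K * (R ^ 2 - ‖x‖ ^ 2)) * (4 * K ^ 2 * ‖x‖ ^ 2 - 2 * K * N) := by
  unfold laplacian
  have h0 : ∀ y : EuclideanSpace ℝ (Fin N), HasFDerivAt
      (fun y : EuclideanSpace ℝ (Fin N) => Real.exp (K * (R ^ 2 - ‖y‖ ^ 2)))
      (Real.exp (K * (R ^ 2 - ‖y‖ ^ 2)) • (K • (-(2 • (innerSL ℝ y) : EuclideanSpace ℝ (Fin N) →L[ℝ] ℝ)))) y := fun y =>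
    (((hasFDerivAt_normsq y).const_sub (R ^ 2)).const_mul K).exp
  have : ∀ i : Fin N, (fun y : EuclideanSpace ℝ (Fin N) =>
      fderiv ℝ (fun y : EuclideanSpace ℝ (Fin N) => Real.exp (K * (R ^ 2 - ‖y‖ ^ 2))) y
        (EuclideanSpace.single i 1))
      = fun y => Real.exp (K * (R ^ 2 - ‖y‖ ^ 2)) * (-2 * K * y i) := by
    intro i; ext y
    rw [(h0 y).fderiv]; simp [EuclideanSpace.inner_single_right]; ring
  simp_rw [this]
  have h2 : ∀ i : Fin N, fderiv ℝ (fun y : EuclideanSpace ℝ (Fin N) =>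
      Real.exp (K * (R ^ 2 - ‖y‖ ^ 2)) * (-2 * K * y i)) x
      (EuclideanSpace.single i 1) =
      Real.exp (K * (R ^ 2 - ‖x‖ ^ 2)) * (4 * K ^ 2 * x i ^ 2 - 2 * K) := by
    intro i
    rw [((h0 x).fun_mul ((hasFDerivAt_coord x i).const_mul (-2 * K))).fderiv]
    simp [EuclideanSpace.inner_single_right]; ring
  simp_rw [h2]
  rw [← Finset.mul_sum, Finset.sum_sub_distrib, ← Finset.mul_sum, normsq_eq]
  simp; ring_nf

end TS
end

section

namespace TS

/-- `u` is a uniform limit on the closed ball of `C²` functions whose Laplacians converge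
uniformly to `g`. -/
def W {N : ℕ} (R : ℝ) (u g : EuclideanSpace ℝ (Fin N) → ℝ) : Prop :=
  ∀ ε > 0, ∃ p : EuclideanSpace ℝ (Fin N) → ℝ, ContDiff ℝ 2 p ∧
    ∀ x ∈ closedBall (0 : EuclideanSpace ℝ (Fin N)) R,
      |p x - u x| ≤ ε ∧ |laplacian p x - g x| ≤ ε

variable {N : ℕ}

lemma W.cont {R : ℝ} {u g : EuclideanSpace ℝ (Fin N) → ℝ} (h : W R u g) :
    ContinuousOn u (closedBall 0 R) := by
  apply continuousOn_of_uniform_approx_of_continuousOn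
  intro s hs
  obtain ⟨ε, hε, hs⟩ := Metric.mem_uniformity_dist.1 hs
  obtain ⟨p, hp, h⟩ := h (ε / 2) (by positivity)
  refine ⟨p, hp.continuous.continuousOn, fun x hx => hs ?_⟩
  rw [dist_comm, Real.dist_eq]
  linarith [(h x hx).1]

lemma W.congr {R : ℝ} {u g u' g' : EuclideanSpace ℝ (Fin N) → ℝ} (h : W R u g)
    (hu : ∀ x ∈ closedBall (0 : EuclideanSpace ℝ (Fin N)) R, u x = u' x)
    (hg : ∀ x ∈ closedBall (0 : EuclideanSpace ℝ (Fin N)) R, g x = g' x) : W R u' g' := by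
  intro ε hε
  obtain ⟨p, hp, h⟩ := h ε hε
  exact ⟨p, hp, fun x hx => by rw [← hu x hx, ← hg x hx]; exact h x hx⟩

lemma W.comb {R : ℝ} {u g u' g' : EuclideanSpace ℝ (Fin N) → ℝ} (h : W R u g) (h' : W R u' g')
    (c d : ℝ) : W R (fun x => c * u x + d * u' x) (fun x => c * g x + d * g' x) := by
  intro ε hε
  have hpos : 0 < |c| + |d| + 1 := by positivity
  obtain ⟨p, hp, h⟩ := h (ε / (|c| + |d| + 1)) (by positivity)
  obtain ⟨q, hq, h'⟩ := h' (ε / (|c| + |d| + 1)) (by positivity)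
  have key : ∀ a b a' b' : ℝ, |a - a'| ≤ ε / (|c| + |d| + 1) → |b - b'| ≤ ε / (|c| + |d| + 1) →
      |(c * a + d * b) - (c * a' + d * b')| ≤ ε := by
    intro a b a' b' h1 h2
    calc |(c * a + d * b) - (c * a' + d * b')| = |c * (a - a') + d * (b - b')| := by ring_nf
      _ ≤ |c| * |a - a'| + |d| * |b - b'| := by
        rw [← abs_mul, ← abs_mul]; exact abs_add_le _ _
      _ ≤ |c| * (ε / (|c| + |d| + 1)) + |d| * (ε / (|c| + |d| + 1)) := by gcongr
      _ ≤ (|c| + |d| + 1) * (ε / (|c| + |d| + 1)) := by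
        have : 0 < ε / (|c| + |d| + 1) := by positivity
        linarith
      _ = ε := by field_simp
  refine ⟨fun y => c * p y + d * q y, (contDiff_const.mul hp).add (contDiff_const.mul hq),
    fun x hx => ⟨key _ _ _ _ (h x hx).1 (h' x hx).1, ?_⟩⟩
  rw [lap_comb hp hq]
  exact key _ _ _ _ (h x hx).2 (h' x hx).2

lemma W.of_contDiff {R : ℝ} {u : EuclideanSpace ℝ (Fin N) → ℝ} (h : ContDiff ℝ 2 u) :
    W R u (laplacian u) := fun ε hε => ⟨u, h, fun x _ => by simp [hε.le]⟩

lemma lap_const (c : ℝ) (x : EuclideanSpace ℝ (Fin N)) : laplacian (fun _ => c) x = 0 := by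
  simp [laplacian]

lemma W_const (R c : ℝ) : W R (fun _ : EuclideanSpace ℝ (Fin N) => c) (fun _ => 0) :=
  (W.of_contDiff (contDiff_const (c := c))).congr (fun _ _ => rfl) (fun x _ => lap_const c x)

lemma W_normsq (R : ℝ) : W R (fun x : EuclideanSpace ℝ (Fin N) => ‖x‖ ^ 2) (fun _ => 2 * N) :=
  (W.of_contDiff (contDiff_norm_sq ℝ)).congr (fun _ _ => rfl) (fun x _ => lap_normsq x)

/-- Maximum principle. -/
lemma W.maxp (hN : 0 < N) {R : ℝ} (hR : 0 < R) {u g : EuclideanSpace ℝ (Fin N) → ℝ}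
    (h : W R u g)
    (hb : ∀ x ∈ sphere (0 : EuclideanSpace ℝ (Fin N)) R, u x ≤ 0)
    (hg : ∀ x ∈ ball (0 : EuclideanSpace ℝ (Fin N)) R, 0 < u x → 0 ≤ g x) :
    ∀ x ∈ closedBall (0 : EuclideanSpace ℝ (Fin N)) R, u x ≤ 0 := by
  intro x0 hx0
  by_contra hc
  push Not at hc
  set m := u x0
  have hNr : (1:ℝ) ≤ N := by exact_mod_cast hN
  set κ := m / (4 * R ^ 2)
  have hκ : 0 < κ := by positivity
  have hκR : κ * R ^ 2 = m / 4 := by simp only [κ]; field_simp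
  obtain ⟨p, hp, hpu⟩ := h (min (m / 8) (N * κ)) (by positivity)
  set U : EuclideanSpace ℝ (Fin N) → ℝ := fun y => 1 * p y + κ * ‖y‖ ^ 2
  have hU : ContDiff ℝ 2 U := (contDiff_const.mul hp).add (contDiff_const.mul (contDiff_norm_sq ℝ))
  obtain ⟨y, hy, hmax⟩ := (isCompact_closedBall (0 : EuclideanSpace ℝ (Fin N)) R).exists_isMaxOn
    ⟨x0, hx0⟩ hU.continuous.continuousOn
  have hyn : ‖y‖ ≤ R := by simpa using hy
  have hy2 : κ * ‖y‖ ^ 2 ≤ m / 4 := by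
    rw [← hκR]; gcongr
  have h1 : U x0 ≤ U y := hmax hx0
  have h2 := abs_le.1 ((hpu x0 hx0).1.trans (min_le_left _ _))
  have h3 := abs_le.1 ((hpu y hy).1.trans (min_le_left _ _))
  have h4 := abs_le.1 ((hpu y hy).2.trans (min_le_right _ _))
  have h5 : 0 ≤ κ * ‖x0‖ ^ 2 := by positivity
  have hupos : 0 < u y := by
    simp only [U] at h1
    linarith [h2.1, h3.2]
  have hyb : y ∈ ball (0 : EuclideanSpace ℝ (Fin N)) R := by
    rcases (lt_or_eq_of_le hyn) with h | h
    · simpa using h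
    · exact absurd (hb y (by simpa using h)) (not_le.2 hupos)
  have hlm : IsLocalMax U y :=
    hmax.isLocalMax (Filter.mem_of_superset (isOpen_ball.mem_nhds hyb) ball_subset_closedBall)
  have h6 := lap_max hU hlm
  rw [lap_comb hp (contDiff_norm_sq ℝ), lap_normsq] at h6
  have h7 := hg y hyb hupos
  have h8 : 0 < N * κ := by positivity
  nlinarith [h4.1]

lemma W.bound (hN : 0 < N) {R : ℝ} (hR : 0 < R) {u k : EuclideanSpace ℝ (Fin N) → ℝ} {l κ : ℝ}
    (hl : 0 ≤ l) (hκ : 0 ≤ κ)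
    (h : W R u (fun x => l * u x + k x))
    (hb : ∀ x ∈ sphere (0 : EuclideanSpace ℝ (Fin N)) R, u x = 0)
    (hk : ∀ x ∈ closedBall (0 : EuclideanSpace ℝ (Fin N)) R, |k x| ≤ κ) :
    ∀ x ∈ closedBall (0 : EuclideanSpace ℝ (Fin N)) R, |u x| ≤ κ * (R ^ 2 / (2 * N)) := by
  have hNr : (1:ℝ) ≤ N := by exact_mod_cast hN
  have hW : ∀ c : ℝ, W R (fun x => c * u x + κ / (2 * N) * (‖x‖ ^ 2 - R ^ 2))
      (fun x => c * (l * u x + k x) + κ) := fun c => by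
    refine (h.comb ((W_normsq R).comb (W_const R (1:ℝ)) 1 (-R ^ 2)) c (κ / (2 * N))).congr
      (fun x _ => by ring) (fun x _ => by field_simp; ring)
  have hgen : ∀ c : ℝ, |c| = 1 → ∀ x ∈ closedBall (0 : EuclideanSpace ℝ (Fin N)) R,
      c * u x + κ / (2 * N) * (‖x‖ ^ 2 - R ^ 2) ≤ 0 := by
    intro c hc
    apply (hW c).maxp hN hR
    · intro x hx
      have : ‖x‖ = R := by simpa using hx
      simp [hb x hx, this]
    · intro x hx hpos
      have hxR : ‖x‖ < R := by simpa using hx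
      have h1 : κ / (2 * N) * (‖x‖ ^ 2 - R ^ 2) ≤ 0 := by
        apply mul_nonpos_of_nonneg_of_nonpos (by positivity)
        nlinarith [norm_nonneg x]
      have h2 : 0 < c * u x := by linarith
      have h3 := hk x (ball_subset_closedBall hx)
      have h4 : |c * k x| ≤ κ := by rw [abs_mul, hc, one_mul]; exact h3
      have h5 := (abs_le.1 h4).1
      have h6 : 0 ≤ l * (c * u x) := by positivity
      linarith
  intro x hx
  have h1 := hgen 1 (by simp) x hx
  have h2 := hgen (-1) (by simp) x hx
  have h3 : 0 ≤ κ / (2 * N) * ‖x‖ ^ 2 := by positivity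
  have h4 : κ * (R ^ 2 / (2 * N)) = κ / (2 * N) * R ^ 2 := by ring
  rw [h4, abs_le]
  constructor <;> nlinarith

end TS
end

section

namespace TS
variable {N : ℕ}

open MvPolynomial in
/-- evaluation of a polynomial on Euclidean space -/
noncomputable def ev (p : MvPolynomial (Fin N) ℝ) (x : EuclideanSpace ℝ (Fin N)) : ℝ :=
  MvPolynomial.eval (fun i => x i) p

lemma ev_fderiv (p : MvPolynomial (Fin N) ℝ) : ∀ x, DifferentiableAt ℝ (ev p) x ∧
    ∀ i, fderiv ℝ (ev p) x (EuclideanSpace.single i 1) = ev (MvPolynomial.pderiv i p) x := by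
  intro x
  induction p using MvPolynomial.induction_on with
  | C a =>
    have : ev (MvPolynomial.C a : MvPolynomial (Fin N) ℝ) = fun _ => a := by ext; simp [ev]
    rw [this]
    refine ⟨differentiableAt_const a, fun i => by simp [ev]⟩
  | add p q hp hq =>
    have : ev (p + q) = fun x => ev p x + ev q x := by ext; simp [ev]
    rw [this]
    refine ⟨hp.1.add hq.1, fun i => ?_⟩
    rw [(hp.1.hasFDerivAt.fun_add hq.1.hasFDerivAt).fderiv]
    simp only [add_apply, hp.2, hq.2]
    simp [ev]
  | mul_X p j hp =>
    have : ev (p * MvPolynomial.X j) = fun x => ev p x * x j := by ext; simp [ev]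
    rw [this]
    have hc := hasFDerivAt_coord x j
    refine ⟨hp.1.mul hc.differentiableAt, fun i => ?_⟩
    rw [(hp.1.hasFDerivAt.fun_mul hc).fderiv]
    simp only [add_apply, smul_apply, hp.2]
    by_cases h : j = i
    · subst h; simp [ev]; try ring
    · have h' : i ≠ j := fun hh => h hh.symm
      simp [ev, MvPolynomial.pderiv_X_of_ne h, h]; try ring

lemma ev_contDiff (p : MvPolynomial (Fin N) ℝ) : ContDiff ℝ 2 (ev p) := by
  induction p using MvPolynomial.induction_on with
  | C a =>
    have : ev (MvPolynomial.C a : MvPolynomial (Fin N) ℝ) = fun _ => a := by ext; simp [ev]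
    rw [this]; exact contDiff_const
  | add p q hp hq =>
    have : ev (p + q) = fun x => ev p x + ev q x := by ext; simp [ev]
    rw [this]; exact hp.add hq
  | mul_X p j hp =>
    have : ev (p * MvPolynomial.X j) = fun x => ev p x * x j := by ext; simp [ev]
    rw [this]
    exact hp.mul (EuclideanSpace.proj j : EuclideanSpace ℝ (Fin N) →L[ℝ] ℝ).contDiff

lemma ev_lap (p : MvPolynomial (Fin N) ℝ) (x : EuclideanSpace ℝ (Fin N)) :
    laplacian (ev p) x = ev (∑ i, MvPolynomial.pderiv i (MvPolynomial.pderiv i p)) x := by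
  unfold laplacian
  have : ∀ i, (fun y => fderiv ℝ (ev p) y (EuclideanSpace.single i 1)) =
      ev (MvPolynomial.pderiv i p) := fun i => funext fun y => (ev_fderiv p y).2 i
  simp_rw [this, (ev_fderiv _ x).2]
  simp [ev]

lemma degree_pderiv (p : MvPolynomial (Fin N) ℝ) (i : Fin N) {m : ℕ}
    (h : p.totalDegree ≤ m + 1) : (MvPolynomial.pderiv i p).totalDegree ≤ m := by
  rw [MvPolynomial.totalDegree, Finset.sup_le_iff]
  intro s hs
  rw [MvPolynomial.mem_support_iff, MvPolynomial.coeff_pderiv] at hs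
  have h1 : s + Finsupp.single i 1 ∈ p.support := by
    rw [MvPolynomial.mem_support_iff]; exact left_ne_zero_of_mul hs
  have h2 := MvPolynomial.le_totalDegree h1
  rw [Finsupp.sum_add_index' (by simp) (by simp)] at h2
  simp at h2
  omega

noncomputable def rho (N : ℕ) (R : ℝ) : MvPolynomial (Fin N) ℝ :=
  MvPolynomial.C (R ^ 2) - ∑ i, MvPolynomial.X i ^ 2

lemma ev_rho (R : ℝ) (q : MvPolynomial (Fin N) ℝ) (x : EuclideanSpace ℝ (Fin N)) :
    ev (rho N R * q) x = (R ^ 2 - ‖x‖ ^ 2) * ev q x := by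
  simp [ev, rho, normsq_eq]

lemma degree_rho (R : ℝ) : (rho N R).totalDegree ≤ 2 := by
  refine (MvPolynomial.totalDegree_sub _ _).trans ?_
  simp only [MvPolynomial.totalDegree_C]
  refine max_le (by norm_num) (MvPolynomial.totalDegree_finsetSum_le ?_)
  intro i _
  exact (MvPolynomial.totalDegree_X_pow i 2).le

lemma degree_L (R : ℝ) {m : ℕ} (q : MvPolynomial (Fin N) ℝ) (h : q.totalDegree ≤ m) :
    (∑ i, MvPolynomial.pderiv i (MvPolynomial.pderiv i (rho N R * q))).totalDegree ≤ m := by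
  refine MvPolynomial.totalDegree_finsetSum_le ?_
  intro i _
  apply degree_pderiv
  apply degree_pderiv
  refine (MvPolynomial.totalDegree_mul _ _).trans ?_
  have := degree_rho (N := N) R
  omega

noncomputable def Lm (N : ℕ) (R : ℝ) (m : ℕ) :
    MvPolynomial.restrictTotalDegree (Fin N) ℝ m →ₗ[ℝ]
      MvPolynomial.restrictTotalDegree (Fin N) ℝ m where
  toFun q := ⟨∑ i, MvPolynomial.pderiv i (MvPolynomial.pderiv i (rho N R * q.1)),
    (MvPolynomial.mem_restrictTotalDegree _ _ _).2
      (degree_L R q.1 ((MvPolynomial.mem_restrictTotalDegree _ _ _).1 q.2))⟩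
  map_add' p q := by
    ext1
    simp only [Submodule.coe_add, mul_add, map_add, Finset.sum_add_distrib]
  map_smul' c p := by
    ext1
    simp only [Submodule.coe_smul, mul_smul_comm, Derivation.map_smul, RingHom.id_apply,
      Finset.smul_sum]

lemma Lm_inj (hN : 0 < N) {R : ℝ} (hR : 0 < R) (m : ℕ) : Function.Injective (Lm N R m) := by
  rw [← LinearMap.ker_eq_bot, LinearMap.ker_eq_bot']
  intro q hq
  have hq' : ∑ i, MvPolynomial.pderiv i (MvPolynomial.pderiv i (rho N R * q.1)) = 0 :=
    congrArg Subtype.val hq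
  have hW : W R (ev (rho N R * q.1)) (fun x => 0 * ev (rho N R * q.1) x + 0) :=
    (W.of_contDiff (ev_contDiff (rho N R * q.1))).congr (fun _ _ => rfl) (fun x _ => by
      rw [ev_lap, hq']; simp [ev])
  have hz := hW.bound (k := fun _ => 0) hN hR le_rfl le_rfl (fun x hx => by
    have : ‖x‖ = R := by simpa using hx
    simp [ev_rho, this]) (fun x _ => by simp)
  ext1
  have hNr : (1:ℝ) ≤ N := by exact_mod_cast hN
  have hpos : 0 < R / N := by positivity
  refine MvPolynomial.funext_set (fun _ => Set.Ioo 0 (R / N)) (fun _ => Set.Ioo_infinite hpos) ?_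
  intro y hy
  set x : EuclideanSpace ℝ (Fin N) := WithLp.toLp 2 y
  have hyi : ∀ i, 0 < y i ∧ y i < R / N := fun i => hy i trivial
  have hx : ‖x‖ ^ 2 < R ^ 2 := by
    rw [normsq_eq]
    have h1 : ∀ i, x i ^ 2 < R / N * (R / N) := fun i => by
      have := hyi i
      change y i ^ 2 < _
      nlinarith
    have : Nonempty (Fin N) := ⟨⟨0, hN⟩⟩
    calc ∑ i, x i ^ 2 < ∑ i : Fin N, R / N * (R / N) :=
          Finset.sum_lt_sum_of_nonempty Finset.univ_nonempty fun i _ => h1 i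
      _ = R ^ 2 / N := by simp; field_simp
      _ ≤ R ^ 2 := div_le_self (by positivity) hNr
  have hx' : ‖x‖ < R := lt_of_pow_lt_pow_left₀ 2 hR.le hx
  have h0 := hz x (by simpa using hx'.le)
  rw [ev_rho, zero_mul, abs_nonpos_iff, mul_eq_zero] at h0
  rcases h0 with h | h
  · linarith
  · simpa [ev] using h

lemma poly_solve (hN : 0 < N) {R : ℝ} (hR : 0 < R) (g : MvPolynomial (Fin N) ℝ) :
    ∃ p : EuclideanSpace ℝ (Fin N) → ℝ, ContDiff ℝ 2 p ∧ (∀ x, laplacian p x = ev g x) ∧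
      ∀ x ∈ sphere (0 : EuclideanSpace ℝ (Fin N)) R, p x = 0 := by
  obtain ⟨q, hq⟩ := LinearMap.injective_iff_surjective.1 (Lm_inj hN hR g.totalDegree)
    ⟨g, (MvPolynomial.mem_restrictTotalDegree _ _ _).2 le_rfl⟩
  have hq' : ∑ i, MvPolynomial.pderiv i (MvPolynomial.pderiv i (rho N R * q.1)) = g :=
    congrArg Subtype.val hq
  refine ⟨ev (rho N R * q.1), ev_contDiff _, fun x => by rw [ev_lap, hq'], fun x hx => ?_⟩
  have : ‖x‖ = R := by simpa using hx
  simp [ev_rho, this]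

end TS
end

section

namespace TS
variable {N : ℕ}

lemma poly_approx {R : ℝ} {g : EuclideanSpace ℝ (Fin N) → ℝ}
    (hg : ContinuousOn g (closedBall 0 R)) {ε : ℝ} (hε : 0 < ε) :
    ∃ p : MvPolynomial (Fin N) ℝ, ∀ x ∈ closedBall (0 : EuclideanSpace ℝ (Fin N)) R,
      |ev p x - g x| ≤ ε := by
  let K := closedBall (0 : EuclideanSpace ℝ (Fin N)) R
  have : CompactSpace K := isCompact_iff_compactSpace.mp (isCompact_closedBall _ _)
  let co : Fin N → C(K, ℝ) := fun i => ⟨fun x => x.1 i, by fun_prop⟩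
  let A : Subalgebra ℝ C(K, ℝ) := (MvPolynomial.aeval co : MvPolynomial (Fin N) ℝ →ₐ[ℝ] _).range
  have hev : ∀ (p : MvPolynomial (Fin N) ℝ) (x : K), (MvPolynomial.aeval co p) x = ev p x.1 := by
    intro p x
    induction p using MvPolynomial.induction_on with
    | C a => simp [ev]
    | add p q hp hq => simp [hp, hq, ev] at *
    | mul_X p j hp => simp [ev] at *; rw [hp]; simp [co]
  have hA : A.SeparatesPoints := by
    intro x y hxy
    have : ∃ i, x.1 i ≠ y.1 i := by
      by_contra hc
      push Not at hc
      exact hxy (Subtype.ext (PiLp.ext hc))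
    obtain ⟨i, hi⟩ := this
    exact ⟨co i, ⟨co i, ⟨MvPolynomial.X i, by simp⟩, rfl⟩, hi⟩
  obtain ⟨⟨_, ⟨p, rfl⟩⟩, h⟩ :=
    ContinuousMap.exists_mem_subalgebra_near_continuous_of_separatesPoints A hA
    (fun x : K => g x.1) (continuousOn_iff_continuous_domRestrict.1 hg) ε hε
  refine ⟨p, fun x hx => ?_⟩
  have := h ⟨x, hx⟩
  rw [← hev p ⟨x, hx⟩]
  exact this.le

/-- Solvability of the Dirichlet problem for `Δ - l` in the generalized sense. -/
def Ex (N : ℕ) (R l : ℝ) : Prop := ∀ g : EuclideanSpace ℝ (Fin N) → ℝ,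
  ContinuousOn g (closedBall 0 R) → ∃ u : EuclideanSpace ℝ (Fin N) → ℝ,
    W R u (fun x => l * u x + g x) ∧ ∀ x ∈ sphere (0 : EuclideanSpace ℝ (Fin N)) R, u x = 0

open Classical in
noncomputable def ext0 {R : ℝ} (v : C(closedBall (0 : EuclideanSpace ℝ (Fin N)) R, ℝ))
    (x : EuclideanSpace ℝ (Fin N)) : ℝ :=
  if h : x ∈ closedBall (0 : EuclideanSpace ℝ (Fin N)) R then v ⟨x, h⟩ else 0

lemma ext0_apply {R : ℝ} (v : C(closedBall (0 : EuclideanSpace ℝ (Fin N)) R, ℝ))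
    {x : EuclideanSpace ℝ (Fin N)} (h : x ∈ closedBall (0 : EuclideanSpace ℝ (Fin N)) R) :
    ext0 v x = v ⟨x, h⟩ := by simp only [ext0, dif_pos h]

lemma ext0_cont {R : ℝ} (v : C(closedBall (0 : EuclideanSpace ℝ (Fin N)) R, ℝ)) :
    ContinuousOn (ext0 v) (closedBall 0 R) := by
  rw [continuousOn_iff_continuous_domRestrict]
  convert v.continuous using 1
  ext x
  exact ext0_apply v x.2

lemma Ex_zero (hN : 0 < N) {R : ℝ} (hR : 0 < R) : Ex N R 0 := by
  intro g hg
  have : CompactSpace (closedBall (0 : EuclideanSpace ℝ (Fin N)) R) :=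
    isCompact_iff_compactSpace.mp (isCompact_closedBall _ _)
  have hNr : (1:ℝ) ≤ N := by exact_mod_cast hN
  have hn : ∀ n : ℕ, 0 < 1 / ((n:ℝ) + 1) := fun n => by positivity
  choose q hq using fun n : ℕ => poly_approx hg (hn n)
  choose p hp hpl hpb using fun n => poly_solve hN hR (q n)
  set C : ℝ := R ^ 2 / (2 * N)
  have hC : 0 < C := by positivity
  have hdist : ∀ n m : ℕ, ∀ x ∈ closedBall (0 : EuclideanSpace ℝ (Fin N)) R,
      |p n x - p m x| ≤ (1 / ((n:ℝ) + 1) + 1 / ((m:ℝ) + 1)) * C := by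
    intro n m x hx
    have hW : W R (fun x => p n x - p m x) (fun x => 0 * (p n x - p m x) + (ev (q n) x - ev (q m) x)) :=
      ((W.of_contDiff (hp n)).comb (W.of_contDiff (hp m)) 1 (-1)).congr (fun _ _ => by ring)
        (fun x _ => by rw [hpl, hpl]; ring)
    refine hW.bound (k := fun x => ev (q n) x - ev (q m) x) hN hR le_rfl (by positivity)
      (fun x hx => ?_) (fun x hx => ?_) x hx
    · rw [hpb n x hx, hpb m x hx]; simp
    · have h1 := hq n x hx
      have h2 := hq m x hx
      calc |ev (q n) x - ev (q m) x| = |(ev (q n) x - g x) - (ev (q m) x - g x)| := by ring_nf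
        _ ≤ _ := (abs_sub _ _).trans (add_le_add h1 h2)
  let P : ℕ → C(closedBall (0 : EuclideanSpace ℝ (Fin N)) R, ℝ) := fun n =>
    ⟨fun x => p n x.1, (hp n).continuous.comp continuous_subtype_val⟩
  have hb0 : Filter.Tendsto (fun n : ℕ => 2 * (1 / ((n:ℝ) + 1)) * C) Filter.atTop (nhds 0) := by
    have := ((tendsto_one_div_add_atTop_nhds_zero_nat (𝕜 := ℝ)).const_mul 2).mul_const C
    simpa using this
  have hcs : CauchySeq P := by
    refine cauchySeq_of_le_tendsto_0 _ (fun n m k hn hm => ?_) hb0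
    rw [ContinuousMap.dist_le (by positivity)]
    intro x
    refine (hdist n m x.1 x.2).trans ?_
    have e1 : 1 / ((n:ℝ) + 1) ≤ 1 / ((k:ℝ) + 1) := by gcongr
    have e2 : 1 / ((m:ℝ) + 1) ≤ 1 / ((k:ℝ) + 1) := by gcongr
    nlinarith
  obtain ⟨v, hv⟩ := cauchySeq_tendsto_of_complete hcs
  have hlim : ∀ ε > 0, ∃ n : ℕ, 1 / ((n:ℝ) + 1) ≤ ε ∧
      ∀ x ∈ closedBall (0 : EuclideanSpace ℝ (Fin N)) R, |p n x - ext0 v x| ≤ ε := by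
    intro ε hε
    have h1 := (Metric.tendsto_nhds.1 hv) ε hε
    have h2 := (tendsto_one_div_add_atTop_nhds_zero_nat (𝕜 := ℝ)).eventually_le_const hε
    obtain ⟨n, h1, h2⟩ := (h1.and h2).exists
    refine ⟨n, h2, fun x hx => ?_⟩
    rw [ext0_apply v hx]
    exact (ContinuousMap.dist_apply_le_dist (f := P n) (g := v) ⟨x, hx⟩).trans h1.le
  refine ⟨ext0 v, ?_, ?_⟩
  · intro ε hε
    obtain ⟨n, h1, h2⟩ := hlim ε hε
    refine ⟨p n, hp n, fun x hx => ⟨h2 x hx, ?_⟩⟩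
    rw [hpl]
    simp only [zero_mul, zero_add]
    exact (hq n x hx).trans h1
  · intro x hx
    by_contra hc
    obtain ⟨n, h1, h2⟩ := hlim (|ext0 v x| / 2) (by positivity)
    have := h2 x (sphere_subset_closedBall hx)
    rw [hpb n x hx, zero_sub, abs_neg] at this
    have : 0 < |ext0 v x| := by positivity
    linarith

lemma Ex_step (hN : 0 < N) {R l μ : ℝ} (hR : 0 < R) (hl : 0 ≤ l) (hμ : 0 ≤ μ)
    (hμ1 : μ * (R ^ 2 / (2 * N)) < 1) (h : Ex N R l) : Ex N R (l + μ) := by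
  intro g hg
  have : CompactSpace (closedBall (0 : EuclideanSpace ℝ (Fin N)) R) :=
    isCompact_iff_compactSpace.mp (isCompact_closedBall _ _)
  have hNr : (1:ℝ) ≤ N := by exact_mod_cast hN
  choose S hS hSb using fun v : C(closedBall (0 : EuclideanSpace ℝ (Fin N)) R, ℝ) =>
    h (fun x => g x + μ * ext0 v x) (hg.add (continuousOn_const.mul (ext0_cont v)))
  let Φ : C(closedBall (0 : EuclideanSpace ℝ (Fin N)) R, ℝ) →
      C(closedBall (0 : EuclideanSpace ℝ (Fin N)) R, ℝ) := fun v =>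
    ⟨fun x => S v x.1, continuousOn_iff_continuous_domRestrict.1 (hS v).cont⟩
  obtain ⟨c, hc⟩ : ∃ c : NNReal, (c : ℝ) = μ * (R ^ 2 / (2 * N)) := ⟨⟨_, by positivity⟩, rfl⟩
  have hctr : ContractingWith c Φ := by
    refine ⟨by rw [← hc] at hμ1; exact_mod_cast hμ1, LipschitzWith.of_dist_le_mul fun v w => ?_⟩
    rw [ContinuousMap.dist_le (by positivity)]
    intro x
    have hW : W R (fun x => S v x - S w x)
        (fun x => l * (S v x - S w x) + μ * (ext0 v x - ext0 w x)) :=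
      ((hS v).comb (hS w) 1 (-1)).congr (fun _ _ => by ring) (fun x _ => by ring)
    have := hW.bound (k := fun x => μ * (ext0 v x - ext0 w x)) (κ := μ * dist v w) hN hR hl
      (by positivity) (fun x hx => by rw [hSb v x hx, hSb w x hx, sub_zero]) (fun x hx => by
        rw [abs_mul, abs_of_nonneg hμ]
        refine mul_le_mul_of_nonneg_left ?_ hμ
        rw [ext0_apply v hx, ext0_apply w hx]
        exact ContinuousMap.dist_apply_le_dist (f := v) (g := w) ⟨x, hx⟩) x.1 x.2
    refine (le_of_eq_of_le ?_ this).trans (le_of_eq ?_)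
    · rfl
    · rw [hc]; ring
  have hfix := hctr.fixedPoint_isFixedPt
  set v := ContractingWith.fixedPoint Φ hctr
  refine ⟨S v, (hS v).congr (fun _ _ => rfl) (fun x hx => ?_), hSb v⟩
  have : S v x = ext0 v x := by
    rw [ext0_apply v hx]
    exact congrArg (fun f : C(closedBall (0 : EuclideanSpace ℝ (Fin N)) R, ℝ) => f ⟨x, hx⟩) hfix
  rw [← this]; ring

lemma Ex_all (hN : 0 < N) {R l : ℝ} (hR : 0 < R) (hl : 0 ≤ l) : Ex N R l := by
  have hNr : (1:ℝ) ≤ N := by exact_mod_cast hN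
  obtain ⟨n, hn⟩ := exists_nat_gt (l * (R ^ 2 / (2 * N)))
  have hn0 : (0:ℝ) < n := lt_of_le_of_lt (by positivity) hn
  have key : ∀ k : ℕ, Ex N R (k * (l / n)) := by
    intro k
    induction k with
    | zero => simpa using Ex_zero hN hR
    | succ k ih =>
      have := Ex_step hN (μ := l / n) hR (by positivity) (by positivity) (by
        rw [div_mul_eq_mul_div, div_lt_one hn0]; exact hn) ih
      convert this using 1
      push_cast; ring
  have := key n
  rwa [mul_div_cancel₀ _ hn0.ne'] at this

end TS
end

section
open Metric MeasureTheory
open scoped ContDiff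
namespace TS
variable {N : ℕ}

noncomputable def hk (t : ℝ) : ℝ := expNegInvGlue (1 - t)
noncomputable def Hk (t : ℝ) : ℝ := -(1 / 2) * ∫ s in (1:ℝ)..t, hk s

lemma hk_contDiff : ContDiff ℝ ∞ hk := expNegInvGlue.contDiff.comp (contDiff_const.sub contDiff_id)

lemma hk_zero {t : ℝ} (h : 1 ≤ t) : hk t = 0 := expNegInvGlue.zero_of_nonpos (by linarith)

lemma hk_nonneg (t : ℝ) : 0 ≤ hk t := expNegInvGlue.nonneg _

lemma Hk_deriv (t : ℝ) : HasDerivAt Hk (-(1 / 2) * hk t) t :=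
  (intervalIntegral.integral_hasDerivAt_right
    (hk_contDiff.continuous.intervalIntegrable _ _)
    (hk_contDiff.continuous.stronglyMeasurableAtFilter _ _)
    hk_contDiff.continuous.continuousAt).const_mul _

lemma Hk_contDiff : ContDiff ℝ ∞ Hk := by
  rw [contDiff_infty_iff_deriv]
  refine ⟨fun t => (Hk_deriv t).differentiableAt, ?_⟩
  have : deriv Hk = fun t => -(1 / 2) * hk t := funext fun t => (Hk_deriv t).deriv
  rw [this]
  exact contDiff_const.mul hk_contDiff

lemma Hk_zero {t : ℝ} (h : 1 ≤ t) : Hk t = 0 := by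
  unfold Hk
  rw [intervalIntegral.integral_congr (g := fun _ => 0)]
  · simp
  · intro s hs
    rw [Set.uIcc_of_le h] at hs
    exact hk_zero hs.1

lemma Hk_nonneg (t : ℝ) : 0 ≤ Hk t := by
  rcases le_total 1 t with h | h
  · rw [Hk_zero h]
  · unfold Hk
    rw [intervalIntegral.integral_symm]
    have := intervalIntegral.integral_nonneg (μ := volume) h (fun s _ => hk_nonneg s)
    linarith

lemma Hk_pos : 0 < Hk 0 := by
  unfold Hk
  rw [intervalIntegral.integral_symm]
  have : 0 < ∫ s in (0:ℝ)..1, hk s := by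
    apply intervalIntegral.intervalIntegral_pos_of_pos_on
      (hk_contDiff.continuous.intervalIntegrable _ _) _ one_pos
    intro s hs
    exact expNegInvGlue.pos_of_pos (by linarith [hs.2])
  linarith

/-- smooth kernels supported in the unit ball -/
def Ker (k : EuclideanSpace ℝ (Fin N) → ℝ) : Prop :=
  ContDiff ℝ ∞ k ∧ ∀ z, 1 ≤ ‖z‖ → k z = 0

lemma Ker.hcs {k : EuclideanSpace ℝ (Fin N) → ℝ} (h : Ker k) : HasCompactSupport k :=
  HasCompactSupport.intro (isCompact_closedBall 0 1) fun z hz => h.2 z (by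
    simp at hz; exact hz.le)

lemma Ker.integrable {k : EuclideanSpace ℝ (Fin N) → ℝ} (h : Ker k) : Integrable k :=
  h.1.continuous.integrable_of_hasCompactSupport h.hcs

noncomputable def phi (z : EuclideanSpace ℝ (Fin N)) : ℝ := hk (‖z‖ ^ 2)
noncomputable def psi (z : EuclideanSpace ℝ (Fin N)) : ℝ := Hk (‖z‖ ^ 2)

lemma phi_ker : Ker (phi : EuclideanSpace ℝ (Fin N) → ℝ) :=
  ⟨hk_contDiff.comp (contDiff_norm_sq ℝ), fun z hz => hk_zero (by nlinarith)⟩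

lemma psi_ker : Ker (psi : EuclideanSpace ℝ (Fin N) → ℝ) :=
  ⟨Hk_contDiff.comp (contDiff_norm_sq ℝ), fun z hz => Hk_zero (by nlinarith)⟩

lemma psi_fderiv (z e : EuclideanSpace ℝ (Fin N)) :
    fderiv ℝ psi z e = - (phi z * inner ℝ z e) := by
  have h := (Hk_deriv (‖z‖ ^ 2)).comp_hasFDerivAt z (hasFDerivAt_normsq z)
  have h' : HasFDerivAt psi _ z := h
  rw [h'.fderiv]
  simp [phi]; ring

lemma psi_dir_ker (e : EuclideanSpace ℝ (Fin N)) :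
    Ker (fun z : EuclideanSpace ℝ (Fin N) => fderiv ℝ psi z e) :=
  ⟨(psi_ker.1.fderiv_right (m := ∞) (by simp)).clm_apply contDiff_const, fun z hz => by
    simp only [psi_fderiv, phi_ker.2 z hz]; simp⟩

lemma phi_int_pos : 0 < ∫ z : EuclideanSpace ℝ (Fin N), phi z :=
  phi_ker.1.continuous.integral_pos_of_hasCompactSupport_nonneg_nonzero phi_ker.hcs
    (fun _ => hk_nonneg _) (x := 0) (by
      have : 0 < hk 0 := expNegInvGlue.pos_of_pos (by norm_num)
      simpa [phi] using this.ne')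

lemma psi_int_pos : 0 < ∫ z : EuclideanSpace ℝ (Fin N), psi z :=
  psi_ker.1.continuous.integral_pos_of_hasCompactSupport_nonneg_nonzero psi_ker.hcs
    (fun _ => Hk_nonneg _) (x := 0) (by simpa [psi] using Hk_pos.ne')

noncomputable def A (k g : EuclideanSpace ℝ (Fin N) → ℝ) (s : ℝ) (x : EuclideanSpace ℝ (Fin N)) :
    ℝ := ∫ z, k z * g (x - s • z)

lemma A_cont {k g : EuclideanSpace ℝ (Fin N) → ℝ} (hk : Ker k) (hg : Continuous g)
    (x : EuclideanSpace ℝ (Fin N)) : Continuous (fun s => A k g s x) := by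
  have h : ∀ s, A k g s x = ∫ z in closedBall (0 : EuclideanSpace ℝ (Fin N)) 1,
      k z * g (x - s • z) := fun s => by
    symm
    apply setIntegral_eq_integral_of_forall_compl_eq_zero
    intro z hz
    rw [hk.2 z (by simp at hz; exact hz.le), zero_mul]
  simp_rw [h]
  have := hk.1.continuous
  exact continuous_parametric_integral_of_continuous (by fun_prop) (isCompact_closedBall 0 1)

lemma A_int {k g : EuclideanSpace ℝ (Fin N) → ℝ} (hk : Ker k) (hg : Continuous g) :
    Integrable (fun z => k z * g z) :=
  (hk.1.continuous.mul hg).integrable_of_hasCompactSupport hk.hcs.mul_right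

lemma A_ibp {p : EuclideanSpace ℝ (Fin N) → ℝ} (hp : ContDiff ℝ 2 p)
    (x : EuclideanSpace ℝ (Fin N)) (s : ℝ) :
    ∫ z, phi z * fderiv ℝ p (x - s • z) (-z) = s * A psi (laplacian p) s x := by
  have hlin : ∀ z : EuclideanSpace ℝ (Fin N),
      HasFDerivAt (fun z : EuclideanSpace ℝ (Fin N) => x - s • z)
        (-(s • ContinuousLinearMap.id ℝ (EuclideanSpace ℝ (Fin N)))) z := fun z =>
    ((hasFDerivAt_id z).const_smul s).const_sub x
  set G : Fin N → EuclideanSpace ℝ (Fin N) → ℝ :=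
    fun i z => fderiv ℝ p (x - s • z) (EuclideanSpace.single i 1)
  have hGd : ∀ i, ContDiff ℝ 1 (G i) := fun i =>
    (diff_fd hp (EuclideanSpace.single i 1)).comp (by fun_prop)
  have hGf : ∀ i z, fderiv ℝ (G i) z (EuclideanSpace.single i 1) = - s *
      fderiv ℝ (fun y => fderiv ℝ p y (EuclideanSpace.single i 1)) (x - s • z)
        (EuclideanSpace.single i 1) := by
    intro i z
    have := (((diff_fd hp (EuclideanSpace.single i 1)).differentiable
      (by norm_num) (x - s • z)).hasFDerivAt).comp z (hlin z)
    have h2 : fderiv ℝ (G i) z = _ := this.fderiv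
    rw [h2]; simp
  have hGf' : ∀ i, Continuous fun z => fderiv ℝ (G i) z (EuclideanSpace.single i 1) := fun i =>
    ((hGd i).continuous_fderiv (by norm_num)).clm_apply continuous_const
  have hpsi' := fun i : Fin N => psi_dir_ker (EuclideanSpace.single i (1:ℝ))
  have hI : ∀ i : Fin N, ∫ z, G i z * fderiv ℝ psi z (EuclideanSpace.single i 1) =
      -∫ z, fderiv ℝ (G i) z (EuclideanSpace.single i 1) * psi z := by
    intro i
    refine integral_mul_fderiv_eq_neg_fderiv_mul_of_integrable ?_ ?_ ?_ ?_ ?_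
    · simpa only [mul_comm] using A_int psi_ker (hGf' i)
    · simpa only [mul_comm] using A_int (hpsi' i) (hGd i).continuous
    · simpa only [mul_comm] using A_int psi_ker (hGd i).continuous
    · exact fun z _ => (hGd i).differentiable (by norm_num) z
    · exact fun z _ => psi_ker.1.differentiable (by simp) z
  have hz : ∀ z : EuclideanSpace ℝ (Fin N), phi z * fderiv ℝ p (x - s • z) (-z) =
      ∑ i, G i z * fderiv ℝ psi z (EuclideanSpace.single i 1) := by
    intro z
    have hzs : z = ∑ i, z i • EuclideanSpace.single i (1:ℝ) := by
      have := (EuclideanSpace.basisFun (Fin N) ℝ).sum_repr z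
      simpa using this.symm
    have : fderiv ℝ p (x - s • z) z = ∑ i, z i * G i z := by
      conv_lhs => rw [hzs]
      rw [map_sum]
      simp only [map_smul, smul_eq_mul]
      rw [← hzs]
    rw [map_neg, this, mul_neg, Finset.mul_sum, ← Finset.sum_neg_distrib]
    refine Finset.sum_congr rfl fun i _ => ?_
    rw [psi_fderiv]
    simp [EuclideanSpace.inner_single_right]; ring
  simp_rw [hz]
  rw [integral_finsetSum]
  · simp_rw [hI, hGf]
    unfold A
    rw [← integral_const_mul]
    have : ∀ z, s * (psi z * laplacian p (x - s • z)) = ∑ i, -(- s *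
      fderiv ℝ (fun y => fderiv ℝ p y (EuclideanSpace.single i 1)) (x - s • z)
        (EuclideanSpace.single i 1) * psi z) := by
      intro z
      unfold laplacian
      rw [Finset.mul_sum, Finset.mul_sum]
      refine Finset.sum_congr rfl fun i _ => by ring
    simp_rw [this]
    rw [integral_finsetSum]
    · simp_rw [integral_neg]
    · intro i _
      simp_rw [← hGf]
      simpa only [mul_comm] using (A_int psi_ker (hGf' i)).fun_neg
  · intro i _
    simpa only [mul_comm] using A_int (hpsi' i) (hGd i).continuous

lemma A_hasDerivAt {p : EuclideanSpace ℝ (Fin N) → ℝ} (hp : ContDiff ℝ 2 p)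
    (x : EuclideanSpace ℝ (Fin N)) (s : ℝ) :
    HasDerivAt (fun s => A phi p s x) (s * A psi (laplacian p) s x) s := by
  rw [← A_ibp hp]
  have hpc := hp.continuous
  have hphi := (phi_ker (N := N)).1.continuous
  have hfd : Continuous (fun q : ℝ × EuclideanSpace ℝ (Fin N) =>
      fderiv ℝ p (x - q.1 • q.2) (-q.2)) :=
    ((hp.continuous_fderiv (by norm_num)).comp (by fun_prop)).clm_apply (by fun_prop)
  obtain ⟨C, hC⟩ := (((isCompact_closedBall s 1).prod
    (isCompact_closedBall (0 : EuclideanSpace ℝ (Fin N)) 1)).exists_bound_of_continuousOn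
      hfd.continuousOn)
  refine (hasDerivAt_integral_of_dominated_loc_of_deriv_le (bound := fun z => phi z * C)
    (F' := fun s z => phi z * fderiv ℝ p (x - s • z) (-z))
    (ball_mem_nhds s one_pos) ?_ ?_ ?_ ?_ ?_ ?_).2
  · exact Filter.Eventually.of_forall fun t =>
      (Continuous.aestronglyMeasurable (by fun_prop))
  · exact A_int (g := fun z => p (x - s • z)) phi_ker (by fun_prop)
  · refine (Continuous.aestronglyMeasurable ?_)
    exact hphi.mul (hfd.comp (by fun_prop : Continuous fun z => (s, z)))
  · refine Filter.Eventually.of_forall fun z t ht => ?_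
    by_cases hz : ‖z‖ ≤ 1
    · rw [norm_mul, Real.norm_of_nonneg (show 0 ≤ phi z from hk_nonneg _)]
      exact mul_le_mul_of_nonneg_left (hC (t, z) ⟨ball_subset_closedBall ht, by simpa using hz⟩)
        (hk_nonneg _)
    · rw [phi_ker.2 z (not_le.1 hz).le]; simp
  · exact phi_ker.integrable.mul_const C
  · refine Filter.Eventually.of_forall fun z t ht => ?_
    have hl : HasDerivAt (fun t : ℝ => x - t • z) (-z) t := by
      simpa using ((hasDerivAt_id t).smul_const z).const_sub x
    exact (((hp.differentiable (by norm_num) _).hasFDerivAt.comp_hasDerivAt t hl)).const_mul _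

def Rep (R : ℝ) (u g : EuclideanSpace ℝ (Fin N) → ℝ) : Prop :=
  ∀ x δ, 0 < δ → ‖x‖ + δ < R →
    (∫ z : EuclideanSpace ℝ (Fin N), phi z) * u x =
      A phi u δ x - ∫ s in (0:ℝ)..δ, s * A psi g s x

lemma rep_smooth {p : EuclideanSpace ℝ (Fin N) → ℝ} (hp : ContDiff ℝ 2 p) (R : ℝ) :
    Rep R p (laplacian p) := by
  intro x δ _ _
  rw [intervalIntegral.integral_eq_sub_of_hasDerivAt (fun s _ => A_hasDerivAt hp x s)]
  · simp [A, integral_mul_const]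
  · exact (continuous_id.mul (A_cont psi_ker (lap_cont hp) x)).intervalIntegrable _ _

lemma A_tendsto {k : EuclideanSpace ℝ (Fin N) → ℝ} (hk : Ker k) {R B : ℝ}
    {u : ℕ → EuclideanSpace ℝ (Fin N) → ℝ} {v : EuclideanSpace ℝ (Fin N) → ℝ}
    (hm : ∀ n, Measurable (u n))
    (hB : ∀ n, ∀ y ∈ ball (0 : EuclideanSpace ℝ (Fin N)) R, |u n y| ≤ B)
    (hl : ∀ y ∈ ball (0 : EuclideanSpace ℝ (Fin N)) R,
      Filter.Tendsto (fun n => u n y) Filter.atTop (nhds (v y)))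
    {x : EuclideanSpace ℝ (Fin N)} {s : ℝ} (hs : 0 ≤ s) (hx : ‖x‖ + s < R) :
    Filter.Tendsto (fun n => A k (u n) s x) Filter.atTop (nhds (A k v s x)) ∧
      ∀ n, |A k (u n) s x| ≤ ∫ z, ‖k z‖ * B := by
  have hkc := hk.1.continuous
  have hin : ∀ z : EuclideanSpace ℝ (Fin N), ‖z‖ ≤ 1 →
      x - s • z ∈ ball (0 : EuclideanSpace ℝ (Fin N)) R := by
    intro z hz
    rw [mem_ball_zero_iff]
    calc ‖x - s • z‖ ≤ ‖x‖ + ‖s • z‖ := norm_sub_le _ _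
      _ = ‖x‖ + s * ‖z‖ := by rw [norm_smul, Real.norm_of_nonneg hs]
      _ ≤ ‖x‖ + s * 1 := by gcongr
      _ < R := by linarith
  have hbd : ∀ n (z : EuclideanSpace ℝ (Fin N)), ‖k z * u n (x - s • z)‖ ≤ ‖k z‖ * B := by
    intro n z
    by_cases hz : ‖z‖ ≤ 1
    · rw [norm_mul]
      exact mul_le_mul_of_nonneg_left (hB n _ (hin z hz)) (norm_nonneg _)
    · rw [hk.2 z (not_le.1 hz).le]; simp
  have hintg : Integrable (fun z => ‖k z‖ * B) := hk.integrable.norm.mul_const B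
  constructor
  · refine tendsto_integral_of_dominated_convergence (fun z => ‖k z‖ * B) ?_ hintg ?_ ?_
    · intro n
      have := hm n
      exact (hkc.measurable.mul ((hm n).comp (by fun_prop))).aestronglyMeasurable
    · exact fun n => Filter.Eventually.of_forall (hbd n)
    · refine Filter.Eventually.of_forall fun z => ?_
      by_cases hz : ‖z‖ ≤ 1
      · exact (hl _ (hin z hz)).const_mul _
      · rw [hk.2 z (not_le.1 hz).le]; simp
  · intro n
    exact norm_integral_le_of_norm_le hintg (Filter.Eventually.of_forall (hbd n))

lemma A_meas {k g : EuclideanSpace ℝ (Fin N) → ℝ} (hk : Ker k) (hg : Measurable g)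
    (x : EuclideanSpace ℝ (Fin N)) : StronglyMeasurable (fun s => A k g s x) := by
  have : Measurable (fun q : ℝ × EuclideanSpace ℝ (Fin N) => k q.2 * g (x - q.1 • q.2)) :=
    (hk.1.continuous.measurable.comp measurable_snd).mul (hg.comp (by fun_prop))
  exact this.stronglyMeasurable.integral_prod_right

lemma rep_limit {R B : ℝ} {u g : ℕ → EuclideanSpace ℝ (Fin N) → ℝ}
    {v h : EuclideanSpace ℝ (Fin N) → ℝ} (hr : ∀ n, Rep R (u n) (g n))
    (hum : ∀ n, Measurable (u n)) (hgm : ∀ n, Measurable (g n))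
    (huB : ∀ n, ∀ y ∈ ball (0 : EuclideanSpace ℝ (Fin N)) R, |u n y| ≤ B)
    (hgB : ∀ n, ∀ y ∈ ball (0 : EuclideanSpace ℝ (Fin N)) R, |g n y| ≤ B)
    (hul : ∀ y ∈ ball (0 : EuclideanSpace ℝ (Fin N)) R,
      Filter.Tendsto (fun n => u n y) Filter.atTop (nhds (v y)))
    (hgl : ∀ y ∈ ball (0 : EuclideanSpace ℝ (Fin N)) R,
      Filter.Tendsto (fun n => g n y) Filter.atTop (nhds (h y))) : Rep R v h := by
  intro x δ hδ hx
  have h1 := (hul x (by rw [mem_ball_zero_iff]; linarith)).const_mul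
    (∫ z : EuclideanSpace ℝ (Fin N), phi z)
  have h2 := (A_tendsto phi_ker hum huB hul hδ.le hx).1
  have h3 : Filter.Tendsto (fun n => ∫ s in (0:ℝ)..δ, s * A psi (g n) s x) Filter.atTop
      (nhds (∫ s in (0:ℝ)..δ, s * A psi h s x)) := by
    have hs : ∀ s ∈ Set.uIoc 0 δ, 0 ≤ s ∧ s ≤ δ ∧ ‖x‖ + s < R := by
      intro s hs
      rw [Set.uIoc_of_le hδ.le] at hs
      exact ⟨hs.1.le, hs.2, by linarith [hs.2]⟩
    refine intervalIntegral.tendsto_integral_filter_of_dominated_convergence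
      (fun _ => δ * ∫ z : EuclideanSpace ℝ (Fin N), ‖psi z‖ * B) ?_ ?_ ?_ ?_
    · exact Filter.Eventually.of_forall fun n =>
        (stronglyMeasurable_id.mul (A_meas psi_ker (hgm n) x)).aestronglyMeasurable
    · refine Filter.Eventually.of_forall fun n => Filter.Eventually.of_forall fun s h => ?_
      obtain ⟨a, b, c⟩ := hs s h
      rw [norm_mul, Real.norm_of_nonneg a]
      exact mul_le_mul b ((A_tendsto psi_ker hgm hgB hgl a c).2 n) (norm_nonneg _) hδ.le
    · simp
    · refine Filter.Eventually.of_forall fun s h => ?_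
      obtain ⟨a, b, c⟩ := hs s h
      exact ((A_tendsto psi_ker hgm hgB hgl a c).1).const_mul s
  refine tendsto_nhds_unique h1 ((h2.sub h3).congr fun n => ?_)
  exact (hr n x δ hδ hx).symm

lemma W.rep {R : ℝ} {u g : EuclideanSpace ℝ (Fin N) → ℝ} (h : W R u g)
    (hg : ContinuousOn g (closedBall 0 R)) : Rep R u g := by
  obtain ⟨B1, hB1⟩ := (isCompact_closedBall (0 : EuclideanSpace ℝ (Fin N)) R).exists_bound_of_continuousOn h.cont
  obtain ⟨B2, hB2⟩ := (isCompact_closedBall (0 : EuclideanSpace ℝ (Fin N)) R).exists_bound_of_continuousOn hg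
  choose p hp hpu using fun n : ℕ => h (1 / ((n:ℝ) + 1)) (by positivity)
  have hle : ∀ n : ℕ, 1 / ((n:ℝ) + 1) ≤ 1 := fun n => by
    rw [div_le_one (by positivity)]; linarith [(Nat.cast_nonneg n : (0:ℝ) ≤ n)]
  have ht := tendsto_one_div_add_atTop_nhds_zero_nat (𝕜 := ℝ)
  refine rep_limit (B := max B1 B2 + 1) (u := p) (g := fun n => laplacian (p n))
    (fun n => rep_smooth (hp n) R)
    (fun n => (hp n).continuous.measurable) (fun n => (lap_cont (hp n)).measurable) ?_ ?_ ?_ ?_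
  · intro n y hy
    have h1 := (hpu n y (ball_subset_closedBall hy)).1.trans (hle n)
    have h2 : |u y| ≤ B1 := hB1 y (ball_subset_closedBall hy)
    have h3 := abs_sub_abs_le_abs_sub (p n y) (u y)
    linarith [le_max_left B1 B2]
  · intro n y hy
    have h1 := (hpu n y (ball_subset_closedBall hy)).2.trans (hle n)
    have h2 : |g y| ≤ B2 := hB2 y (ball_subset_closedBall hy)
    have h3 := abs_sub_abs_le_abs_sub (laplacian (p n) y) (g y)
    linarith [le_max_right B1 B2]
  · intro y hy
    rw [tendsto_iff_dist_tendsto_zero]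
    exact squeeze_zero (fun _ => dist_nonneg)
      (fun n => (hpu n y (ball_subset_closedBall hy)).1) ht
  · intro y hy
    rw [tendsto_iff_dist_tendsto_zero]
    exact squeeze_zero (fun _ => dist_nonneg)
      (fun n => (hpu n y (ball_subset_closedBall hy)).2) ht

end TS
end

section
open Metric MeasureTheory
open scoped ContDiff Convolution
namespace TS
variable {N : ℕ}

/-- scaled kernel -/
noncomputable def sk (k : EuclideanSpace ℝ (Fin N) → ℝ) (s : ℝ) (y : EuclideanSpace ℝ (Fin N)) : ℝ :=
  (s ^ N)⁻¹ * k (s⁻¹ • y)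

lemma A_conv (k g : EuclideanSpace ℝ (Fin N) → ℝ) {s : ℝ} (hs : 0 < s)
    (x : EuclideanSpace ℝ (Fin N)) :
    A k g s x = (g ⋆[ContinuousLinearMap.mul ℝ ℝ, volume] sk k s) x := by
  have h := Measure.integral_comp_smul (volume : Measure (EuclideanSpace ℝ (Fin N)))
    (fun w => k (s⁻¹ • w) * g (x - w)) s
  have h1 : A k g s x = ∫ z, (fun w => k (s⁻¹ • w) * g (x - w)) (s • z) := by
    unfold A
    refine integral_congr_ae (Filter.Eventually.of_forall fun z => ?_)
    simp only [smul_smul, inv_mul_cancel₀ hs.ne', one_smul]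
  rw [h1, h, finrank_euclideanSpace_fin, abs_of_pos (by positivity), smul_eq_mul,
    ← integral_const_mul, convolution,
    ← integral_sub_left_eq_self _ (volume : Measure (EuclideanSpace ℝ (Fin N))) x]
  refine integral_congr_ae (Filter.Eventually.of_forall fun z => ?_)
  simp [sk]; ring

lemma sk_contDiff {k : EuclideanSpace ℝ (Fin N) → ℝ} (hk : Ker k) (b : ℝ) :
    ContDiffOn ℝ ∞ (fun q : ℝ × EuclideanSpace ℝ (Fin N) => sk k q.1 q.2)
      (Set.Ioo 0 b ×ˢ Set.univ) := by
  have h0 : ∀ q ∈ (Set.Ioo 0 b ×ˢ (Set.univ : Set (EuclideanSpace ℝ (Fin N)))), q.1 ≠ 0 :=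
    fun q hq => hq.1.1.ne'
  unfold sk
  refine ContDiffOn.mul ((contDiff_fst.pow N).contDiffOn.inv fun q hq => pow_ne_zero N (h0 q hq)) ?_
  exact hk.1.comp_contDiffOn ((contDiff_fst.contDiffOn.inv h0).smul contDiff_snd.contDiffOn)

lemma A_smooth {k g : EuclideanSpace ℝ (Fin N) → ℝ} (hk : Ker k) (hg : LocallyIntegrable g) (b : ℝ) :
    ContDiffOn ℝ ∞ (fun q : ℝ × EuclideanSpace ℝ (Fin N) => A k g q.1 q.2)
      (Set.Ioo 0 b ×ˢ Set.univ) := by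
  have := contDiffOn_convolution_right_with_param (n := ⊤) (ContinuousLinearMap.mul ℝ ℝ)
    (μ := (volume : Measure (EuclideanSpace ℝ (Fin N)))) (g := sk k)
    (s := Set.Ioo 0 b) (k := closedBall 0 b) isOpen_Ioo (isCompact_closedBall 0 b) (f := g)
    (by
      intro p y hp hy
      unfold sk
      rw [hk.2, mul_zero]
      simp at hy
      rw [norm_smul, norm_inv, Real.norm_of_nonneg hp.1.le, ← div_eq_inv_mul, le_div_iff₀ hp.1]
      linarith [hp.2]) hg (sk_contDiff hk b)
  refine this.congr fun q hq => ?_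
  exact A_conv k g hq.1.1 q.2

lemma A_smooth_x {k g : EuclideanSpace ℝ (Fin N) → ℝ} (hk : Ker k) (hg : LocallyIntegrable g)
    {s : ℝ} (hs : 0 < s) : ContDiff ℝ ∞ (A k g s) := by
  have h := (A_smooth hk hg (s + 1)).comp (contDiff_prodMk_right s).contDiffOn
    (s := (Set.univ : Set (EuclideanSpace ℝ (Fin N))))
    (fun x _ => ⟨⟨hs, by linarith⟩, trivial⟩)
  exact contDiffOn_univ.1 h

lemma A_fderiv {k g : EuclideanSpace ℝ (Fin N) → ℝ} (hk : Ker k) (hg : LocallyIntegrable g)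
    {s : ℝ} (hs : 0 < s) (x e : EuclideanSpace ℝ (Fin N)) :
    fderiv ℝ (A k g s) x e = s⁻¹ * A (fun z => fderiv ℝ k z e) g s x := by
  have hA : A k g s = (g ⋆[ContinuousLinearMap.mul ℝ ℝ, volume] sk k s) :=
    funext fun x => A_conv k g hs x
  have hskc : ContDiff ℝ 1 (sk k s) :=
    contDiff_const.mul ((hk.1.of_le (by simp)).comp (contDiff_const_smul _))
  have hcs : HasCompactSupport (sk k s) := by
    refine HasCompactSupport.intro (isCompact_closedBall 0 s) fun y hy => ?_
    unfold sk
    rw [hk.2, mul_zero]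
    simp at hy
    rw [norm_smul, norm_inv, Real.norm_of_nonneg hs.le, ← div_eq_inv_mul, le_div_iff₀ hs]
    linarith
  have h := hcs.hasFDerivAt_convolution_right (ContinuousLinearMap.mul ℝ ℝ)
    (μ := (volume : Measure (EuclideanSpace ℝ (Fin N)))) hg hskc x
  rw [hA, h.fderiv, convolution_precompR_apply _ hg (hcs.fderiv ℝ)
    (hskc.continuous_fderiv (by norm_num)), A_conv _ _ hs]
  have : (fun a => fderiv ℝ (sk k s) a e) = fun a => s⁻¹ * sk (fun z => fderiv ℝ k z e) s a := by
    ext a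
    have h1 : HasFDerivAt (fun y : EuclideanSpace ℝ (Fin N) => s⁻¹ • y)
      (s⁻¹ • ContinuousLinearMap.id ℝ (EuclideanSpace ℝ (Fin N))) a :=
      (s⁻¹ • ContinuousLinearMap.id ℝ (EuclideanSpace ℝ (Fin N))).hasFDerivAt
    have h2 := ((hk.1.differentiable (by simp) (s⁻¹ • a)).hasFDerivAt.comp a h1).const_mul ((s ^ N)⁻¹)
    have h3 : HasFDerivAt (sk k s) _ a := h2
    rw [h3.fderiv]
    simp [sk]; ring
  rw [this]
  unfold convolution
  rw [← integral_const_mul]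
  congr 1
  ext t
  simp; ring

lemma locInt {g : EuclideanSpace ℝ (Fin N) → ℝ} {B : ℝ} (hm : Measurable g) (hB : ∀ y, |g y| ≤ B) :
    LocallyIntegrable g :=
  (locallyIntegrable_const B).mono hm.aestronglyMeasurable
    (Filter.Eventually.of_forall fun y => (hB y).trans (le_abs_self B))

lemma A_bound {k g : EuclideanSpace ℝ (Fin N) → ℝ} {B : ℝ} (hk : Ker k) (hB : ∀ y, |g y| ≤ B)
    (s : ℝ) (x : EuclideanSpace ℝ (Fin N)) : |A k g s x| ≤ ∫ z, ‖k z‖ * B := by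
  unfold A
  rw [← Real.norm_eq_abs]
  refine norm_integral_le_of_norm_le (hk.integrable.norm.mul_const B)
    (Filter.Eventually.of_forall fun z => ?_)
  rw [norm_mul]
  exact mul_le_mul_of_nonneg_left (hB _) (norm_nonneg _)

lemma A_integrable {k g : EuclideanSpace ℝ (Fin N) → ℝ} {B : ℝ} (hk : Ker k) (hm : Measurable g)
    (hB : ∀ y, |g y| ≤ B) (s : ℝ) (x : EuclideanSpace ℝ (Fin N)) :
    Integrable (fun z => k z * g (x - s • z)) := by
  refine (hk.integrable.norm.mul_const B).mono'
    (hk.1.continuous.measurable.mul (hm.comp (by fun_prop))).aestronglyMeasurable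
    (Filter.Eventually.of_forall fun z => ?_)
  rw [norm_mul]
  exact mul_le_mul_of_nonneg_left (hB _) (norm_nonneg _)

lemma A_lip {k g : EuclideanSpace ℝ (Fin N) → ℝ} {B L r : ℝ} (hk : Ker k) (hm : Measurable g)
    (hB : ∀ y, |g y| ≤ B) (hL : 0 ≤ L) {x0 : EuclideanSpace ℝ (Fin N)}
    (hlip : ∀ y ∈ ball x0 (2 * r), ∀ y' ∈ ball x0 (2 * r), |g y - g y'| ≤ L * ‖y - y'‖)
    {s : ℝ} (hs : 0 < s) (hsr : s ≤ r) {x x' : EuclideanSpace ℝ (Fin N)} (hx : x ∈ ball x0 r)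
    (hx' : x' ∈ ball x0 r) :
    |A k g s x - A k g s x'| ≤ (∫ z, ‖k z‖ * L) * ‖x - x'‖ := by
  have hin : ∀ z : EuclideanSpace ℝ (Fin N), ‖z‖ ≤ 1 → ∀ x ∈ ball x0 r,
      x - s • z ∈ ball x0 (2 * r) := by
    intro z hz x hx
    rw [mem_ball_iff_norm] at *
    calc ‖x - s • z - x0‖ = ‖(x - x0) - s • z‖ := by congr 1; abel
      _ ≤ ‖x - x0‖ + ‖s • z‖ := norm_sub_le _ _
      _ = ‖x - x0‖ + s * ‖z‖ := by rw [norm_smul, Real.norm_of_nonneg hs.le]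
      _ ≤ ‖x - x0‖ + s * 1 := by gcongr
      _ < 2 * r := by linarith
  unfold A
  rw [← integral_sub (A_integrable hk hm hB s x) (A_integrable hk hm hB s x'), ← integral_mul_const,
    ← Real.norm_eq_abs]
  refine norm_integral_le_of_norm_le ((hk.integrable.norm.mul_const L).mul_const _)
    (Filter.Eventually.of_forall fun z => ?_)
  rw [← mul_sub, norm_mul, mul_assoc]
  by_cases hz : ‖z‖ ≤ 1
  · refine mul_le_mul_of_nonneg_left ?_ (norm_nonneg _)
    refine (hlip _ (hin z hz x hx) _ (hin z hz x' hx')).trans (le_of_eq ?_)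
    congr 2; abel
  · rw [hk.2 z (not_le.1 hz).le]; simp

lemma C1int {G : ℝ → EuclideanSpace ℝ (Fin N) → ℝ} {δ b C : ℝ} (hδb : δ < b)
    {V : Set (EuclideanSpace ℝ (Fin N))} (hV : IsOpen V)
    (hG : ContDiffOn ℝ 1 (fun q : ℝ × EuclideanSpace ℝ (Fin N) => G q.1 q.2)
      (Set.Ioo 0 b ×ˢ Set.univ))
    (hG0 : ∀ s ∈ Set.Ioc 0 δ, ∀ x ∈ V, ‖G s x‖ ≤ C)
    (hG1 : ∀ s ∈ Set.Ioc 0 δ, ∀ x ∈ V, ‖fderiv ℝ (G s) x‖ ≤ C) :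
    ContDiffOn ℝ 1 (fun x => ∫ s in Set.Ioc 0 δ, G s x) V ∧
    ∀ x ∈ V, ∀ e, fderiv ℝ (fun x => ∫ s in Set.Ioc 0 δ, G s x) x e =
      ∫ s in Set.Ioc 0 δ, fderiv ℝ (G s) x e := by
  have hop : IsOpen (Set.Ioo 0 b ×ˢ (Set.univ : Set (EuclideanSpace ℝ (Fin N)))) :=
    isOpen_Ioo.prod isOpen_univ
  have hsub : ∀ s ∈ Set.Ioc 0 δ, s ∈ Set.Ioo 0 b := fun s hs => ⟨hs.1, by linarith [hs.2]⟩
  have hfd : ∀ s ∈ Set.Ioc 0 δ, ∀ x, HasFDerivAt (G s)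
      ((fderiv ℝ (fun q : ℝ × EuclideanSpace ℝ (Fin N) => G q.1 q.2) (s, x)).comp
        (ContinuousLinearMap.inr ℝ ℝ (EuclideanSpace ℝ (Fin N)))) x := by
    intro s hs x
    have h1 := ((hG.differentiableOn (by norm_num)).differentiableAt
      (hop.mem_nhds (show (s, x) ∈ Set.Ioo 0 b ×ˢ (Set.univ : Set (EuclideanSpace ℝ (Fin N))) from
        ⟨hsub s hs, trivial⟩))).hasFDerivAt
    exact h1.comp x (hasFDerivAt_prodMk_right s x)
  have hcont := hG.continuousOn_fderiv_of_isOpen hop (by norm_num)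
  have hfc : ∀ x, ContinuousOn (fun s => fderiv ℝ (G s) x) (Set.Ioc 0 δ) := by
    intro x
    have h1 : ContinuousOn (fun s : ℝ =>
        (fderiv ℝ (fun q : ℝ × EuclideanSpace ℝ (Fin N) => G q.1 q.2) (s, x)).comp
        (ContinuousLinearMap.inr ℝ ℝ (EuclideanSpace ℝ (Fin N)))) (Set.Ioc 0 δ) := by
      refine ContinuousOn.clm_comp (hcont.comp (by fun_prop) fun s hs => ⟨hsub s hs, trivial⟩)
        continuousOn_const
    exact h1.congr fun s hs => (hfd s hs x).fderiv
  have hGm : ∀ x, AEStronglyMeasurable (fun s => G s x) (volume.restrict (Set.Ioc 0 δ)) := fun x =>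
    (hG.continuousOn.comp (f := fun s : ℝ => (s, x)) (by fun_prop)
      fun s hs => ⟨hsub s hs, trivial⟩).aestronglyMeasurable measurableSet_Ioc
  have hG'm : ∀ x, AEStronglyMeasurable (fun s => fderiv ℝ (G s) x)
      (volume.restrict (Set.Ioc 0 δ)) := fun x => (hfc x).aestronglyMeasurable measurableSet_Ioc
  have hCi : Integrable (fun _ : ℝ => C) (volume.restrict (Set.Ioc 0 δ)) := by simp
  have hae : ∀ {P : ℝ → Prop}, (∀ s ∈ Set.Ioc 0 δ, P s) →
      ∀ᵐ s ∂(volume.restrict (Set.Ioc 0 δ)), P s := fun h =>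
    (ae_restrict_iff' measurableSet_Ioc).2 (Filter.Eventually.of_forall h)
  have hmain : ∀ x ∈ V, HasFDerivAt (fun x => ∫ s in Set.Ioc 0 δ, G s x)
      (∫ s in Set.Ioc 0 δ, fderiv ℝ (G s) x) x := by
    intro x hx
    refine hasFDerivAt_integral_of_dominated_of_fderiv_le (F' := fun x s => fderiv ℝ (G s) x)
      (bound := fun _ => C) (hV.mem_nhds hx) (Filter.Eventually.of_forall hGm) ?_ (hG'm x) ?_ hCi ?_
    · exact hCi.mono' (hGm x) (hae fun s hs => hG0 s hs x hx)
    · exact hae fun s hs y hy => hG1 s hs y hy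
    · exact hae fun s hs y hy => (hfd s hs y).differentiableAt.hasFDerivAt
  constructor
  · rw [show (1 : WithTop ℕ∞) = 0 + 1 by simp, contDiffOn_succ_iff_fderiv_of_isOpen hV]
    refine ⟨fun x hx => (hmain x hx).differentiableAt.differentiableWithinAt, by simp, ?_⟩
    rw [contDiffOn_zero]
    refine ContinuousOn.congr ?_ fun x hx => (hmain x hx).fderiv
    refine continuousOn_of_dominated (bound := fun _ => C) (fun x _ => hG'm x)
      (fun x hx => hae fun s hs => hG1 s hs x hx) hCi (hae fun s hs => ?_)
    have h1 : Continuous (fun x =>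
        (fderiv ℝ (fun q : ℝ × EuclideanSpace ℝ (Fin N) => G q.1 q.2) (s, x)).comp
        (ContinuousLinearMap.inr ℝ ℝ (EuclideanSpace ℝ (Fin N)))) := by
      refine Continuous.clm_comp ?_ continuous_const
      rw [← continuousOn_univ]
      exact hcont.comp (by fun_prop) fun x _ => ⟨hsub s hs, trivial⟩
    exact (h1.congr fun x => (hfd s hs x).fderiv.symm).continuousOn
  · intro x hx e
    rw [(hmain x hx).fderiv]
    refine ContinuousLinearMap.integral_apply ?_ e
    exact hCi.mono' (hG'm x) (hae fun s hs => hG1 s hs x hx)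

end TS
end

section
open Metric MeasureTheory
open scoped ContDiff
namespace TS
variable {N : ℕ}

lemma psi_dir_bound (z e : EuclideanSpace ℝ (Fin N)) : ‖fderiv ℝ psi z e‖ ≤ ‖phi z‖ * ‖e‖ := by
  rw [psi_fderiv, norm_neg, norm_mul]
  by_cases hz : ‖z‖ ≤ 1
  · refine mul_le_mul_of_nonneg_left ?_ (norm_nonneg _)
    calc ‖inner ℝ z e‖ ≤ ‖z‖ * ‖e‖ := norm_inner_le_norm z e
      _ ≤ 1 * ‖e‖ := by gcongr
      _ = ‖e‖ := one_mul _
  · rw [phi_ker.2 z (not_le.1 hz).le]; simp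

lemma psi_dir_A {g : EuclideanSpace ℝ (Fin N) → ℝ} {B : ℝ} (hB : ∀ y, |g y| ≤ B) (s : ℝ)
    (x e : EuclideanSpace ℝ (Fin N)) :
    |A (fun z => fderiv ℝ psi z e) g s x| ≤ (∫ z : EuclideanSpace ℝ (Fin N), ‖phi z‖ * B) * ‖e‖ := by
  have hB0 : 0 ≤ B := (abs_nonneg _).trans (hB 0)
  refine (A_bound (psi_dir_ker e) hB s x).trans ?_
  rw [← integral_mul_const]
  refine integral_mono ((psi_dir_ker e).integrable.norm.mul_const B)
    ((phi_ker.integrable.norm.mul_const B).mul_const _) fun z => ?_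
  have := psi_dir_bound z e
  simp only
  nlinarith

lemma reg_aux {R B : ℝ} {u g : EuclideanSpace ℝ (Fin N) → ℝ} (hr : Rep R u g)
    (hum : Measurable u) (hgm : Measurable g) (hub : ∀ y, |u y| ≤ B) (hgb : ∀ y, |g y| ≤ B)
    {x0 : EuclideanSpace ℝ (Fin N)} {δ : ℝ} (hδ : 0 < δ) (hx0 : ‖x0‖ + 2 * δ < R) :
    ContDiffOn ℝ 1 u (ball x0 δ) ∧ ∀ x ∈ ball x0 δ, ∀ e, fderiv ℝ u x e =
      (∫ z : EuclideanSpace ℝ (Fin N), phi z)⁻¹ * (fderiv ℝ (A phi u δ) x e -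
        ∫ s in Set.Ioc 0 δ, A (fun z => fderiv ℝ psi z e) g s x) := by
  set c := ∫ z : EuclideanSpace ℝ (Fin N), phi z with hc
  have hc0 : c ≠ 0 := phi_int_pos.ne'
  have hli := locInt hgm hgb
  have hB0 : 0 ≤ B := (abs_nonneg _).trans (hub 0)
  have hI : 0 ≤ ∫ z : EuclideanSpace ℝ (Fin N), ‖psi z‖ * B := integral_nonneg fun z => by positivity
  have hI' : 0 ≤ ∫ z : EuclideanSpace ℝ (Fin N), ‖phi z‖ * B := integral_nonneg fun z => by positivity
  have hform : ∀ x ∈ ball x0 δ, u x = c⁻¹ * (A phi u δ x - ∫ s in Set.Ioc 0 δ, s * A psi g s x) := by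
    intro x hx
    have h1 : ‖x‖ + δ < R := by
      rw [mem_ball_iff_norm] at hx
      have := norm_le_norm_add_norm_sub' x x0
      linarith
    have := hr x δ hδ h1
    rw [intervalIntegral.integral_of_le hδ.le] at this
    rw [← this, ← mul_assoc, inv_mul_cancel₀ hc0, one_mul]
  have hfdG : ∀ s ∈ Set.Ioc 0 δ, ∀ x e, fderiv ℝ (fun x => s * A psi g s x) x e =
      A (fun z => fderiv ℝ psi z e) g s x := by
    intro s hs x e
    rw [fderiv_const_mul ((A_smooth_x psi_ker hli hs.1).differentiable (by simp) x)]
    rw [smul_apply, A_fderiv psi_ker hli hs.1, smul_eq_mul, ← mul_assoc,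
      mul_inv_cancel₀ hs.1.ne', one_mul]
  obtain ⟨h1, h2⟩ := C1int (G := fun s x => s * A psi g s x) (δ := δ) (b := δ + 1)
    (C := δ * (∫ z : EuclideanSpace ℝ (Fin N), ‖psi z‖ * B) +
      ∫ z : EuclideanSpace ℝ (Fin N), ‖phi z‖ * B) (by linarith) (isOpen_ball (x := x0) (ε := δ))
    (contDiff_fst.contDiffOn.mul ((A_smooth psi_ker hli (δ + 1)).of_le (by simp)))
    (by
      intro s hs x _
      rw [norm_mul, Real.norm_of_nonneg hs.1.le]
      have := A_bound (psi_ker (N := N)) hgb s x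
      have : s * ‖A psi g s x‖ ≤ δ * (∫ z : EuclideanSpace ℝ (Fin N), ‖psi z‖ * B) :=
        mul_le_mul hs.2 this (norm_nonneg _) hδ.le
      linarith)
    (by
      intro s hs x _
      refine ContinuousLinearMap.opNorm_le_bound _ (by positivity) fun e => ?_
      rw [hfdG s hs x e]
      refine (psi_dir_A hgb s x e).trans ?_
      gcongr
      have := mul_nonneg hδ.le hI
      linarith)
  have hAs : ContDiff ℝ ∞ (A phi u δ) := A_smooth_x phi_ker (locInt hum hub) hδ
  refine ⟨(contDiffOn_const.mul ((hAs.of_le (by simp)).contDiffOn.sub h1)).congr hform, ?_⟩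
  intro x hx e
  have hd1 : DifferentiableAt ℝ (A phi u δ) x := hAs.differentiable (by simp) x
  have hd2 : DifferentiableAt ℝ (fun x => ∫ s in Set.Ioc 0 δ, s * A psi g s x) x :=
    (h1.differentiableOn (by norm_num)).differentiableAt (isOpen_ball.mem_nhds hx)
  have he : u =ᶠ[nhds x] fun x => c⁻¹ * (A phi u δ x - ∫ s in Set.Ioc 0 δ, s * A psi g s x) :=
    Filter.eventuallyEq_of_mem (isOpen_ball.mem_nhds hx) hform
  have h3 := ((hd1.hasFDerivAt.fun_sub hd2.hasFDerivAt).const_mul c⁻¹)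
  rw [he.fderiv_eq, h3.fderiv]
  rw [smul_apply, sub_apply, h2 x hx e, smul_eq_mul]
  congr 2
  exact setIntegral_congr_fun measurableSet_Ioc fun s hs => hfdG s hs x e

lemma reg1 {R B : ℝ} {u g : EuclideanSpace ℝ (Fin N) → ℝ} (hr : Rep R u g)
    (hum : Measurable u) (hgm : Measurable g) (hub : ∀ y, |u y| ≤ B) (hgb : ∀ y, |g y| ≤ B) :
    ContDiffOn ℝ 1 u (ball 0 R) := by
  intro x0 hx0
  rw [mem_ball_zero_iff] at hx0
  have hδ : 0 < (R - ‖x0‖) / 4 := by linarith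
  have := (reg_aux hr hum hgm hub hgb (x0 := x0) hδ (by linarith)).1
  exact (this.contDiffAt (ball_mem_nhds x0 hδ)).contDiffWithinAt

lemma reg2 {R B : ℝ} {u g : EuclideanSpace ℝ (Fin N) → ℝ} (hr : Rep R u g)
    (hum : Measurable u) (hgm : Measurable g) (hub : ∀ y, |u y| ≤ B) (hgb : ∀ y, |g y| ≤ B)
    (hlip : ∀ x0 ∈ ball (0 : EuclideanSpace ℝ (Fin N)) R, ∃ L r : ℝ, 0 ≤ L ∧ 0 < r ∧
      ∀ y ∈ ball x0 r, ∀ y' ∈ ball x0 r, |g y - g y'| ≤ L * ‖y - y'‖) :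
    ContDiffOn ℝ 2 u (ball 0 R) := by
  intro x0 hx0
  obtain ⟨L, r, hL, hr0, hl⟩ := hlip x0 hx0
  rw [mem_ball_zero_iff] at hx0
  set δ := min ((R - ‖x0‖) / 4) (r / 2) with hδdef
  have hδ : 0 < δ := lt_min (by linarith) (by linarith)
  have hδ1 : δ ≤ (R - ‖x0‖) / 4 := min_le_left _ _
  have hδ2 : δ ≤ r / 2 := min_le_right _ _
  obtain ⟨h1, h2⟩ := reg_aux hr hum hgm hub hgb (x0 := x0) hδ (by linarith)
  have hli := locInt hgm hgb
  have hB0 : 0 ≤ B := (abs_nonneg _).trans (hub 0)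
  have hAs : ContDiff ℝ ∞ (A phi u δ) := A_smooth_x phi_ker (locInt hum hub) hδ
  have hl' : ∀ y ∈ ball x0 (2 * δ), ∀ y' ∈ ball x0 (2 * δ), |g y - g y'| ≤ L * ‖y - y'‖ := by
    intro y hy y' hy'
    exact hl y (ball_subset_ball (by linarith) hy) y' (ball_subset_ball (by linarith) hy')
  have key : ContDiffOn ℝ 2 u (ball x0 δ) := by
    rw [show (2 : WithTop ℕ∞) = 1 + 1 by norm_num, contDiffOn_succ_iff_fderiv_of_isOpen isOpen_ball]
    refine ⟨h1.differentiableOn (by norm_num), by simp, ?_⟩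
    rw [contDiffOn_clm_apply]
    intro e
    have hI : 0 ≤ ∫ z : EuclideanSpace ℝ (Fin N), ‖fderiv ℝ psi z e‖ * B :=
      integral_nonneg fun z => by positivity
    have hI' : 0 ≤ ∫ z : EuclideanSpace ℝ (Fin N), ‖fderiv ℝ psi z e‖ * L :=
      integral_nonneg fun z => by positivity
    obtain ⟨h3, -⟩ := C1int (G := fun s x => A (fun z => fderiv ℝ psi z e) g s x)
      (δ := δ) (b := δ + 1)
      (C := (∫ z : EuclideanSpace ℝ (Fin N), ‖fderiv ℝ psi z e‖ * B) +
        ∫ z : EuclideanSpace ℝ (Fin N), ‖fderiv ℝ psi z e‖ * L) (by linarith)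
      (isOpen_ball (x := x0) (ε := δ))
      ((A_smooth (psi_dir_ker e) hli (δ + 1)).of_le (by simp))
      (by
        intro s hs x _
        have := A_bound (psi_dir_ker e) hgb s x
        rw [Real.norm_eq_abs]
        linarith)
      (by
        intro s hs x hx
        refine norm_fderiv_le_of_lip' ℝ (by positivity) ?_
        filter_upwards [isOpen_ball.mem_nhds hx] with y hy
        have := A_lip (psi_dir_ker e) hgm hgb hL hl' hs.1 hs.2 hy hx
        rw [Real.norm_eq_abs]
        refine this.trans ?_
        gcongr
        linarith)
    have h4 : ContDiffOn ℝ 1 (fun x => fderiv ℝ (A phi u δ) x e) (ball x0 δ) :=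
      (((show ContDiff ℝ 2 (A phi u δ) by exact_mod_cast contDiff_infty.1 hAs 2).fderiv_right (m := 1) (by norm_num)).clm_apply
        contDiff_const).contDiffOn
    exact (contDiffOn_const.mul (h4.sub h3)).congr fun x hx => h2 x hx e
  exact (key.contDiffAt (ball_mem_nhds x0 hδ)).contDiffWithinAt

lemma A_congr {k g g' : EuclideanSpace ℝ (Fin N) → ℝ} (hk : Ker k) {x : EuclideanSpace ℝ (Fin N)}
    {s r : ℝ} (hs : 0 ≤ s) (hsr : s ≤ r) (h : ∀ y ∈ closedBall x r, g y = g' y) :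
    A k g s x = A k g' s x := by
  unfold A
  refine integral_congr_ae (Filter.Eventually.of_forall fun z => ?_)
  simp only
  by_cases hz : ‖z‖ ≤ 1
  · rw [h]
    rw [mem_closedBall_iff_norm, sub_sub_cancel_left, norm_neg, norm_smul, Real.norm_of_nonneg hs]
    nlinarith [norm_nonneg z]
  · rw [hk.2 z (not_le.1 hz).le]; simp

lemma rep_lap {R : ℝ} {u g : EuclideanSpace ℝ (Fin N) → ℝ} (hr : Rep R u g)
    (hu : ContDiffOn ℝ 2 u (ball 0 R)) (hg : ContinuousOn g (ball 0 R))
    {x0 : EuclideanSpace ℝ (Fin N)} (hx0 : x0 ∈ ball (0 : EuclideanSpace ℝ (Fin N)) R) :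
    laplacian u x0 = g x0 := by
  have hx0n := hx0
  rw [mem_ball_zero_iff] at hx0n
  set r := (R - ‖x0‖) / 4 with hrdef
  have hr0 : 0 < r := by rw [hrdef]; linarith
  have hsub : closedBall x0 (2 * r) ⊆ ball 0 R := by
    intro y hy
    rw [mem_closedBall_iff_norm] at hy
    rw [mem_ball_zero_iff]
    have := norm_le_norm_add_norm_sub' y x0
    linarith
  let η : ContDiffBump x0 := ⟨r, 2 * r, hr0, by linarith⟩
  have hηt : tsupport η = closedBall x0 (2 * r) := η.tsupport_eq
  have hη1 : ∀ y ∈ closedBall x0 r, η y = 1 := fun y hy => η.one_of_mem_closedBall hy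
  have hη0 : ∀ y ∉ closedBall x0 (2 * r), η =ᶠ[nhds y] 0 := by
    intro y hy
    rw [← hηt] at hy
    exact notMem_tsupport_iff_eventuallyEq.1 hy
  have hu' : ContDiff ℝ 2 (fun y => η y * u y) := by
    rw [contDiff_iff_contDiffAt]
    intro y
    by_cases hy : y ∈ closedBall x0 (2 * r)
    · exact η.contDiff.contDiffAt.mul (hu.contDiffAt (isOpen_ball.mem_nhds (hsub hy)))
    · refine (contDiffAt_const (c := (0:ℝ))).congr_of_eventuallyEq ?_
      filter_upwards [hη0 y hy] with z hz
      simp [hz]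
  have hg' : Continuous (fun y => η y * g y) := by
    rw [continuous_iff_continuousAt]
    intro y
    by_cases hy : y ∈ closedBall x0 (2 * r)
    · exact η.continuous.continuousAt.mul (hg.continuousAt (isOpen_ball.mem_nhds (hsub hy)))
    · refine (continuousAt_const (y := (0:ℝ))).congr ?_
      filter_upwards [hη0 y hy] with z hz
      simp [hz]
  have hrs := rep_smooth hu' R
  set v := fun y => η y * u y with hv
  have hlv : Continuous (laplacian v) := lap_cont hu'
  have hintg : ∀ δ ∈ Set.Ioo 0 r, ∫ s in (0:ℝ)..δ, s * A psi (laplacian v) s x0 =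
      ∫ s in (0:ℝ)..δ, s * A psi (fun y => η y * g y) s x0 := by
    intro δ hδ
    have e1 := hrs x0 δ hδ.1 (by linarith [hδ.2])
    have e2 := hr x0 δ hδ.1 (by linarith [hδ.2])
    have e3 : v x0 = u x0 := by simp [hv, hη1 x0 (mem_closedBall_self hr0.le)]
    have e4 : A phi v δ x0 = A phi u δ x0 :=
      A_congr phi_ker hδ.1.le hδ.2.le fun y hy => by simp [hv, hη1 y hy]
    have e5 : ∫ s in (0:ℝ)..δ, s * A psi g s x0 =
        ∫ s in (0:ℝ)..δ, s * A psi (fun y => η y * g y) s x0 := by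
      refine intervalIntegral.integral_congr fun s hs => ?_
      rw [Set.uIcc_of_le hδ.1.le] at hs
      rw [A_congr psi_ker hs.1 (hs.2.trans hδ.2.le) fun y hy => ?_]
      simp [hη1 y hy]
    rw [e3, e4] at e1
    rw [← e5]
    linarith
  have hc1 := A_cont (psi_ker (N := N)) hlv x0
  have hc2 := A_cont (psi_ker (N := N)) hg' x0
  have heqA : ∀ s ∈ Set.Ioo 0 r, A psi (laplacian v) s x0 = A psi (fun y => η y * g y) s x0 := by
    intro s hs
    have d1 := (continuous_id.mul hc1).deriv_integral _ 0 s
    have d2 := (continuous_id.mul hc2).deriv_integral _ 0 s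
    have : deriv (fun δ => ∫ s in (0:ℝ)..δ, s * A psi (laplacian v) s x0) s =
        deriv (fun δ => ∫ s in (0:ℝ)..δ, s * A psi (fun y => η y * g y) s x0) s :=
      (Filter.eventuallyEq_of_mem (isOpen_Ioo.mem_nhds hs) hintg).deriv_eq
    have h3 := d1.symm.trans (this.trans d2)
    simpa [hs.1.ne'] using h3
  have h0 : A psi (laplacian v) 0 x0 = A psi (fun y => η y * g y) 0 x0 := by
    have t1 : Filter.Tendsto (fun s => A psi (laplacian v) s x0) (nhdsWithin 0 (Set.Ioi 0))
      (nhds (A psi (laplacian v) 0 x0)) := hc1.continuousAt.tendsto.mono_left nhdsWithin_le_nhds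
    have t2 : Filter.Tendsto (fun s => A psi (fun y => η y * g y) s x0) (nhdsWithin 0 (Set.Ioi 0))
      (nhds (A psi (fun y => η y * g y) 0 x0)) :=
        hc2.continuousAt.tendsto.mono_left nhdsWithin_le_nhds
    refine tendsto_nhds_unique t1 (t2.congr' ?_)
    filter_upwards [Ioo_mem_nhdsGT hr0] with s hs
    exact (heqA s hs).symm
  unfold A at h0
  simp only [zero_smul, sub_zero] at h0
  rw [integral_mul_const, integral_mul_const, hη1 x0 (mem_closedBall_self hr0.le), one_mul] at h0
  have h5 := mul_left_cancel₀ (psi_int_pos (N := N)).ne' h0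
  rw [← h5]
  refine (lap_congr ?_).symm
  filter_upwards [closedBall_mem_nhds x0 hr0] with y hy
  simp [hv, hη1 y hy]

end TS
end

section
open Metric MeasureTheory
open scoped ContDiff
namespace TS
variable {N : ℕ}

noncomputable def FF (q : EuclideanSpace ℝ (Fin N) → ℝ) (a c : ℝ) (x : EuclideanSpace ℝ (Fin N))
    (s t : ℝ) : ℝ := s * (q x + a * Real.log s - c * Real.log t)

noncomputable def dd (K R : ℝ) (x : EuclideanSpace ℝ (Fin N)) : ℝ := Real.exp (K * (R ^ 2 - ‖x‖ ^ 2))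

structure Par (N : ℕ) (R : ℝ) (q : EuclideanSpace ℝ (Fin N) → ℝ) (a c Q K K' l : ℝ) : Prop where
  hN : 0 < N
  hR : 0 < R
  hq : Continuous q
  hq0 : ∀ x, 0 ≤ q x
  hq1 : ∀ x, q x ≤ Q * ‖x‖ ^ 2
  hlq : LocallyLipschitz q
  hQ : 0 ≤ Q
  ha : 0 ≤ a
  hc : 0 ≤ c
  hK : K < 0
  hK' : K' < 0
  heq : 4 * K ^ 2 + a * K - Q - c * K' = 0
  hineq : 0 ≤ -(a * R ^ 2 * K) - 2 * K * N + c * R ^ 2 * K'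
  hl : Q * R ^ 2 + a + c * (-((K + K') * R ^ 2)) ≤ l

section
variable {R : ℝ} {q : EuclideanSpace ℝ (Fin N) → ℝ} {a c Q K K' l : ℝ}

lemma FF_anti (hc : 0 ≤ c) (x : EuclideanSpace ℝ (Fin N)) {s t t' : ℝ} (hs : 0 < s) (ht : 0 < t)
    (htt : t ≤ t') : FF q a c x s t' ≤ FF q a c x s t := by
  unfold FF
  have h1 := Real.log_le_log ht htt
  have h2 := mul_le_mul_of_nonneg_left h1 hc
  exact mul_le_mul_of_nonneg_left (by linarith) hs.le

lemma Par.lnn (h : Par N R q a c Q K K' l) : 0 ≤ l := by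
  have h1 : 0 ≤ Q * R ^ 2 := mul_nonneg h.hQ (sq_nonneg R)
  have h2 : 0 ≤ c * (-((K + K') * R ^ 2)) :=
    mul_nonneg h.hc (by nlinarith [sq_nonneg R, h.hK, h.hK'])
  linarith [h.hl, h.ha]

lemma Par.qb (h : Par N R q a c Q K K' l) {x : EuclideanSpace ℝ (Fin N)} (hx : x ∈ closedBall 0 R) :
    q x ≤ Q * R ^ 2 := by
  rw [mem_closedBall_zero_iff] at hx
  refine (h.hq1 x).trans (mul_le_mul_of_nonneg_left ?_ h.hQ)
  exact pow_le_pow_left₀ (norm_nonneg _) hx 2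

lemma dd_pos (K R : ℝ) (x : EuclideanSpace ℝ (Fin N)) : 0 < dd K R x := Real.exp_pos _

lemma sq_gap {x : EuclideanSpace ℝ (Fin N)} (hx : x ∈ closedBall 0 R) : 0 ≤ R ^ 2 - ‖x‖ ^ 2 := by
  rw [mem_closedBall_zero_iff] at hx
  have := pow_le_pow_left₀ (norm_nonneg x) hx 2
  linarith

lemma dd_le_one (hK : K < 0) {x : EuclideanSpace ℝ (Fin N)} (hx : x ∈ closedBall 0 R) :
    dd K R x ≤ 1 := by
  unfold dd
  rw [Real.exp_le_one_iff]
  nlinarith [sq_gap hx]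

lemma dd_sphere {x : EuclideanSpace ℝ (Fin N)} (hx : x ∈ sphere 0 R) : dd K R x = 1 := by
  rw [mem_sphere_zero_iff_norm] at hx
  simp [dd, hx]

lemma log_ge (hK : K < 0) (x : EuclideanSpace ℝ (Fin N)) {t : ℝ} (ht : dd K R x ≤ t) :
    K * R ^ 2 ≤ Real.log t := by
  have h := Real.log_le_log (dd_pos K R x) ht
  rw [dd, Real.log_exp] at h
  nlinarith [sq_nonneg ‖x‖]

lemma Par.lip (h : Par N R q a c Q K K' l) {x : EuclideanSpace ℝ (Fin N)} (hx : x ∈ closedBall 0 R)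
    {s s' t : ℝ} (hs : 0 < s) (hss : s ≤ s') (hs1 : s' ≤ 1) (ht : dd K' R x ≤ t) :
    FF q a c x s' t - FF q a c x s t ≤ l * (s' - s) := by
  have hs' : 0 < s' := hs.trans_le hss
  have h1 : K' * R ^ 2 ≤ Real.log t := log_ge h.hK' x ht
  have h2 : q x - c * Real.log t ≤ Q * R ^ 2 + c * (-((K + K') * R ^ 2)) := by
    have := h.qb hx
    have h3 : -Real.log t ≤ -((K + K') * R ^ 2) := by nlinarith [h.hK, sq_nonneg R]
    have := mul_le_mul_of_nonneg_left h3 h.hc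
    linarith
  have h3 : s' * Real.log s' - s * Real.log s ≤ s' - s := by
    have e1 : Real.log s' ≤ 0 := Real.log_nonpos hs'.le hs1
    have e2 : Real.log (s' / s) ≤ s' / s - 1 := Real.log_le_sub_one_of_pos (by positivity)
    rw [Real.log_div hs'.ne' hs.ne'] at e2
    have e3 := mul_le_mul_of_nonneg_left e2 hs.le
    have e4 : s * (s' / s - 1) = s' - s := by field_simp
    nlinarith
  have h4 := mul_le_mul_of_nonneg_left h3 h.ha
  have h5 := mul_le_mul_of_nonneg_right h2 (sub_nonneg.2 hss)
  have h6 := mul_le_mul_of_nonneg_right h.hl (sub_nonneg.2 hss)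
  unfold FF
  nlinarith

lemma Par.sub (h : Par N R q a c Q K K' l) (x : EuclideanSpace ℝ (Fin N)) :
    FF q a c x (dd K R x) (dd K' R x) ≤ laplacian (dd K R) x := by
  have e : laplacian (dd K R) x = dd K R x * (4 * K ^ 2 * ‖x‖ ^ 2 - 2 * K * N) := lap_exp K R x
  rw [e]
  unfold FF
  refine mul_le_mul_of_nonneg_left ?_ (dd_pos K R x).le
  have l1 : Real.log (dd K R x) = K * (R ^ 2 - ‖x‖ ^ 2) := Real.log_exp _
  have l2 : Real.log (dd K' R x) = K' * (R ^ 2 - ‖x‖ ^ 2) := Real.log_exp _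
  rw [l1, l2]
  have h1 := h.hq1 x
  have h2 : (4 * K ^ 2 + a * K - Q - c * K') * ‖x‖ ^ 2 = 0 := by rw [h.heq, zero_mul]
  have h3 := h.hineq
  linarith

def Bas (R K : ℝ) (u : EuclideanSpace ℝ (Fin N) → ℝ) : Prop :=
  Measurable u ∧ ContinuousOn u (closedBall 0 R) ∧
  (∀ y ∉ closedBall (0 : EuclideanSpace ℝ (Fin N)) R, u y = 0) ∧
  (∀ x ∈ closedBall (0 : EuclideanSpace ℝ (Fin N)) R, dd K R x ≤ u x ∧ u x ≤ 1) ∧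
  ∀ x ∈ sphere (0 : EuclideanSpace ℝ (Fin N)) R, u x = 1

def Sup (R : ℝ) (q : EuclideanSpace ℝ (Fin N) → ℝ) (a c : ℝ) (u v : EuclideanSpace ℝ (Fin N) → ℝ) :
    Prop :=
  ∃ g, W R u g ∧ ∀ x ∈ closedBall (0 : EuclideanSpace ℝ (Fin N)) R, g x ≤ FF q a c x (u x) (v x)

noncomputable def GG (q : EuclideanSpace ℝ (Fin N) → ℝ) (a c l : ℝ)
    (u v u' : EuclideanSpace ℝ (Fin N) → ℝ) (x : EuclideanSpace ℝ (Fin N)) : ℝ :=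
  l * u' x + FF q a c x (u x) (v x) - l * u x

lemma FF_cont (hq : Continuous q) {S : Set (EuclideanSpace ℝ (Fin N))}
    {u v : EuclideanSpace ℝ (Fin N) → ℝ} (hu : ContinuousOn u S) (hv : ContinuousOn v S)
    (hu0 : ∀ x ∈ S, 0 < u x) (hv0 : ∀ x ∈ S, 0 < v x) :
    ContinuousOn (fun x => FF q a c x (u x) (v x)) S := by
  unfold FF
  exact hu.mul ((hq.continuousOn.add (continuousOn_const.mul
    (hu.log fun x hx => (hu0 x hx).ne'))).sub (continuousOn_const.mul
    (hv.log fun x hx => (hv0 x hx).ne')))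

lemma Bas.pos {u : EuclideanSpace ℝ (Fin N) → ℝ} (h : Bas R K u) :
    ∀ x ∈ closedBall (0 : EuclideanSpace ℝ (Fin N)) R, 0 < u x :=
  fun x hx => (dd_pos K R x).trans_le (h.2.2.2.1 x hx).1

lemma Par.step (h : Par N R q a c Q K K' l) {u v : EuclideanSpace ℝ (Fin N) → ℝ}
    (hu : Bas R K u) (hv : Bas R K' v) (hs : Sup R q a c u v) :
    ∃ u', Bas R K u' ∧ (∀ x ∈ closedBall (0 : EuclideanSpace ℝ (Fin N)) R, u' x ≤ u x) ∧
      W R u' (GG q a c l u v u') := by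
  obtain ⟨g, hg, hgF⟩ := hs
  have hFc := FF_cont (a := a) (c := c) h.hq hu.2.1 hv.2.1 hu.pos hv.pos
  obtain ⟨w, hw, hw0⟩ := Ex_all h.hN h.hR h.lnn
    (fun x => l + FF q a c x (u x) (v x) - l * u x)
    ((continuousOn_const.add hFc).sub (continuousOn_const.mul hu.2.1))
  classical
  set u' : EuclideanSpace ℝ (Fin N) → ℝ :=
    Set.indicator (closedBall 0 R) (fun x => 1 + w x) with hu'
  have hin : ∀ x ∈ closedBall (0 : EuclideanSpace ℝ (Fin N)) R, u' x = 1 + w x := fun x hx =>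
    Set.indicator_of_mem hx _
  have hsc : sphere (0 : EuclideanSpace ℝ (Fin N)) R ⊆ closedBall 0 R := sphere_subset_closedBall
  have hW : W R u' (GG q a c l u v u') := by
    refine ((W_const R 1).comb hw 1 1).congr (fun x hx => ?_) (fun x hx => ?_)
    · rw [hin x hx]; ring
    · unfold GG; rw [hin x hx]; ring
  have hsp : ∀ x ∈ sphere (0 : EuclideanSpace ℝ (Fin N)) R, u' x = 1 := fun x hx => by
    rw [hin x (hsc hx), hw0 x hx, add_zero]
  have hle : ∀ x ∈ closedBall (0 : EuclideanSpace ℝ (Fin N)) R, u' x ≤ u x := by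
    have := (hW.comb hg 1 (-1)).maxp h.hN h.hR
      (fun x hx => by rw [hsp x hx, hu.2.2.2.2 x hx]; norm_num)
      (fun x hx hp => by
        have h1 := hgF x (ball_subset_closedBall hx)
        have h2 := mul_nonneg h.lnn hp.le
        unfold GG
        linarith)
    intro x hx
    linarith [this x hx]
  have hge : ∀ x ∈ closedBall (0 : EuclideanSpace ℝ (Fin N)) R, dd K R x ≤ u' x := by
    have hd : W R (dd K R) (laplacian (dd (N := N) K R)) := W.of_contDiff (contDiff_expq K R)
    have := (hd.comb hW 1 (-1)).maxp h.hN h.hR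
      (fun x hx => by rw [hsp x hx, dd_sphere hx]; norm_num)
      (fun x hx hp => by
        have hx' := ball_subset_closedBall hx
        have h2 := mul_nonneg h.lnn hp.le
        have h3 := h.sub x
        have h4 := FF_anti (q := q) (a := a) h.hc x (dd_pos K R x) (dd_pos K' R x)
          (hv.2.2.2.1 x hx').1
        have h5 := h.lip hx' (dd_pos K R x) (hu.2.2.2.1 x hx').1 (hu.2.2.2.1 x hx').2
          (hv.2.2.2.1 x hx').1
        unfold GG
        linarith)
    intro x hx
    linarith [this x hx]
  refine ⟨u', ⟨?_, hW.cont, fun y hy => Set.indicator_of_notMem hy _, fun x hx =>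
    ⟨hge x hx, (hle x hx).trans (hu.2.2.2.1 x hx).2⟩, hsp⟩, hle, hW⟩
  have hc : ContinuousOn (fun x => 1 + w x) (closedBall 0 R) := continuousOn_const.add hw.cont
  rw [hu', ← Set.piecewise_eq_indicator]
  exact hc.measurable_piecewise continuousOn_const measurableSet_closedBall

lemma Par.sup (h : Par N R q a c Q K K' l) {u v u' v' : EuclideanSpace ℝ (Fin N) → ℝ}
    (hu : Bas R K u) (hu' : Bas R K u') (hv' : Bas R K' v') (hv : Bas R K' v)
    (huu : ∀ x ∈ closedBall (0 : EuclideanSpace ℝ (Fin N)) R, u' x ≤ u x)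
    (hvv : ∀ x ∈ closedBall (0 : EuclideanSpace ℝ (Fin N)) R, v' x ≤ v x)
    (hW : W R u' (GG q a c l u v u')) : Sup R q a c u' v' := by
  refine ⟨_, hW, fun x hx => ?_⟩
  have h4 := FF_anti (q := q) (a := a) h.hc x (hu'.pos x hx) (hv'.pos x hx) (hvv x hx)
  have h5 := h.lip hx (hu'.pos x hx) (huu x hx) (hu.2.2.2.1 x hx).2 (hv.2.2.2.1 x hx).1
  unfold GG
  linarith

lemma Bas_one (hK : K < 0) : Bas R K (Set.indicator (closedBall (0 : EuclideanSpace ℝ (Fin N)) R) 1) := by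
  have hin : ∀ x ∈ closedBall (0 : EuclideanSpace ℝ (Fin N)) R,
    Set.indicator (closedBall (0 : EuclideanSpace ℝ (Fin N)) R) (1 : EuclideanSpace ℝ (Fin N) → ℝ) x = 1 := fun x hx =>
    Set.indicator_of_mem hx _
  refine ⟨measurable_one.indicator measurableSet_closedBall, continuousOn_const.congr hin,
    fun y hy => Set.indicator_of_notMem hy _, fun x hx => ?_, fun x hx =>
    hin x (sphere_subset_closedBall hx)⟩
  rw [hin x hx]
  exact ⟨dd_le_one hK hx, le_rfl⟩

lemma Sup_one (hq : ∀ x, 0 ≤ q x) : Sup R q a c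
    (Set.indicator (closedBall (0 : EuclideanSpace ℝ (Fin N)) R) 1)
    (Set.indicator (closedBall (0 : EuclideanSpace ℝ (Fin N)) R) 1) := by
  refine ⟨fun _ => 0, (W_const R 1).congr (fun x hx => by rw [Set.indicator_of_mem hx]; rfl)
    (fun _ _ => rfl), fun x hx => ?_⟩
  rw [Set.indicator_of_mem hx]
  simp [FF, hq x]

/-- bound for the nonlinearity -/
lemma Par.Fb (h : Par N R q a c Q K K' l) {x : EuclideanSpace ℝ (Fin N)} (hx : x ∈ closedBall 0 R)
    {s t : ℝ} (hs : dd K R x ≤ s) (hs1 : s ≤ 1) (ht : dd K' R x ≤ t) (ht1 : t ≤ 1) :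
    |FF q a c x s t| ≤ Q * R ^ 2 + a * (-(K * R ^ 2)) + c * (-(K' * R ^ 2)) := by
  have hs0 : 0 < s := (dd_pos K R x).trans_le hs
  have ht0 : 0 < t := (dd_pos K' R x).trans_le ht
  have h1 := log_ge h.hK x hs
  have h2 := log_ge h.hK' x ht
  have h3 := Real.log_nonpos hs0.le hs1
  have h4 := Real.log_nonpos ht0.le ht1
  have h5 := h.hq0 x
  have h6 := h.qb hx
  have h7 := mul_le_mul_of_nonneg_left h1 h.ha
  have h8 := mul_le_mul_of_nonneg_left h2 h.hc
  have h9 := mul_nonneg h.ha (neg_nonneg.2 h3)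
  have h10 := mul_nonneg h.hc (neg_nonneg.2 h4)
  unfold FF
  rw [abs_mul, abs_of_pos hs0]
  calc s * |q x + a * Real.log s - c * Real.log t| ≤ 1 * |q x + a * Real.log s - c * Real.log t| := by
        gcongr
    _ ≤ _ := by
        rw [one_mul, abs_le]
        constructor <;> linarith

lemma FF_meas (hq : Continuous q) {u v : EuclideanSpace ℝ (Fin N) → ℝ} (hu : Measurable u)
    (hv : Measurable v) : Measurable (fun x => FF q a c x (u x) (v x)) := by
  unfold FF
  have := hq.measurable
  fun_prop

/-- weak-limit data -/
def Lim (R K : ℝ) (u : ℕ → EuclideanSpace ℝ (Fin N) → ℝ) (us : EuclideanSpace ℝ (Fin N) → ℝ) : Prop :=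
  (∀ n, Bas R K (u n)) ∧ Measurable us ∧
  (∀ y ∉ closedBall (0 : EuclideanSpace ℝ (Fin N)) R, us y = 0) ∧
  (∀ x ∈ closedBall (0 : EuclideanSpace ℝ (Fin N)) R, dd K R x ≤ us x ∧ us x ≤ 1) ∧
  ∀ x, Filter.Tendsto (fun n => u n x) Filter.atTop (nhds (us x))

lemma exists_lim {u : ℕ → EuclideanSpace ℝ (Fin N) → ℝ} (hu : ∀ n, Bas R K (u n))
    (hd : ∀ n, ∀ x ∈ closedBall (0 : EuclideanSpace ℝ (Fin N)) R, u (n + 1) x ≤ u n x) :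
    ∃ us, Lim R K u us := by
  have ht : ∀ x, ∃ y, Filter.Tendsto (fun n => u n x) Filter.atTop (nhds y) := by
    intro x
    by_cases hx : x ∈ closedBall (0 : EuclideanSpace ℝ (Fin N)) R
    · refine ⟨_, tendsto_atTop_ciInf (antitone_nat_of_succ_le fun n => hd n x hx)
        ⟨0, ?_⟩⟩
      rintro _ ⟨n, rfl⟩
      exact ((hu n).pos x hx).le
    · refine ⟨0, ?_⟩
      simp only [(hu _).2.2.1 x hx]
      exact tendsto_const_nhds
  choose us hus using ht
  refine ⟨us, hu, measurable_of_tendsto_metrizable (fun n => (hu n).1) (tendsto_pi_nhds.2 hus),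
    fun y hy => ?_, fun x hx => ⟨?_, ?_⟩, hus⟩
  · refine tendsto_nhds_unique (hus y) ?_
    simp only [(hu _).2.2.1 y hy]
    exact tendsto_const_nhds
  · exact ge_of_tendsto' (hus x) fun n => ((hu n).2.2.2.1 x hx).1
  · exact le_of_tendsto' (hus x) fun n => ((hu n).2.2.2.1 x hx).2

lemma Par.rep (h : Par N R q a c Q K K' l) {u v : ℕ → EuclideanSpace ℝ (Fin N) → ℝ}
    {us vs : EuclideanSpace ℝ (Fin N) → ℝ} (hu : Lim R K u us) (hv : Lim R K' v vs)
    (hW : ∀ n, W R (u (n + 1)) (GG q a c l (u n) (v n) (u (n + 1)))) :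
    Rep R us (fun x => FF q a c x (us x) (vs x)) := by
  set C := Q * R ^ 2 + a * (-(K * R ^ 2)) + c * (-(K' * R ^ 2)) with hC
  have hl := h.lnn
  have hub : ∀ n, ∀ x ∈ closedBall (0 : EuclideanSpace ℝ (Fin N)) R, |u n x| ≤ 1 := by
    intro n x hx
    rw [abs_of_pos ((hu.1 n).pos x hx)]
    exact ((hu.1 n).2.2.2.1 x hx).2
  have hFb : ∀ n, ∀ x ∈ closedBall (0 : EuclideanSpace ℝ (Fin N)) R,
      |FF q a c x (u n x) (v n x)| ≤ C := by
    intro n x hx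
    have h1 := (hu.1 n).2.2.2.1 x hx
    have h2 := (hv.1 n).2.2.2.1 x hx
    exact h.Fb hx h1.1 h1.2 h2.1 h2.2
  have hC0 : 0 ≤ C := (abs_nonneg _).trans (hFb 0 0 (mem_closedBall_self h.hR.le))
  refine rep_limit (B := 2 * l + C + 1) (u := fun n => u (n + 1))
    (g := fun n => GG q a c l (u n) (v n) (u (n + 1))) (fun n => (hW n).rep ?_)
    (fun n => (hu.1 _).1) (fun n => ?_) (fun n y hy => ?_) (fun n y hy => ?_)
    (fun y _ => (Filter.tendsto_add_atTop_iff_nat 1).2 (hu.2.2.2.2 y)) (fun y hy => ?_)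
  · exact ((continuousOn_const.mul (hu.1 _).2.1).add (FF_cont h.hq (hu.1 _).2.1 (hv.1 _).2.1
      (hu.1 _).pos (hv.1 _).pos)).sub (continuousOn_const.mul (hu.1 _).2.1)
  · exact (((hu.1 _).1.const_mul l).add (FF_meas h.hq (hu.1 _).1 (hv.1 _).1)).sub
      ((hu.1 _).1.const_mul l)
  · have := hub (n + 1) y (ball_subset_closedBall hy)
    linarith
  · have hy' := ball_subset_closedBall hy
    have h1 := abs_le.1 (hub (n + 1) y hy')
    have h2 := abs_le.1 (hub n y hy')
    have h3 := abs_le.1 (hFb n y hy')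
    simp only [GG]
    rw [abs_le]
    constructor <;> nlinarith
  · have hy' := ball_subset_closedBall hy
    have hp : us y ≠ 0 := ((dd_pos K R y).trans_le (hu.2.2.2.1 y hy').1).ne'
    have hp' : vs y ≠ 0 := ((dd_pos K' R y).trans_le (hv.2.2.2.1 y hy').1).ne'
    have t1 := hu.2.2.2.2 y
    have t2 := hv.2.2.2.2 y
    have t3 := (Filter.tendsto_add_atTop_iff_nat 1).2 t1
    have t4 : Filter.Tendsto (fun n => FF q a c y (u n y) (v n y)) Filter.atTop
        (nhds (FF q a c y (us y) (vs y))) :=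
      t1.mul (((t1.log hp).const_mul a |>.const_add (q y)).sub ((t2.log hp').const_mul c))
    have t5 := ((t3.const_mul l).add t4).sub (t1.const_mul l)
    simp only [add_sub_cancel_left] at t5
    exact t5

lemma Lim.bd {u : ℕ → EuclideanSpace ℝ (Fin N) → ℝ} {us : EuclideanSpace ℝ (Fin N) → ℝ}
    (hu : Lim R K u us) (y : EuclideanSpace ℝ (Fin N)) : |us y| ≤ 1 := by
  by_cases hy : y ∈ closedBall (0 : EuclideanSpace ℝ (Fin N)) R
  · have := hu.2.2.2.1 y hy
    rw [abs_of_pos ((dd_pos K R y).trans_le this.1)]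
    exact this.2
  · simp [hu.2.2.1 y hy]

lemma Par.FFbd (h : Par N R q a c Q K K' l) {u v : ℕ → EuclideanSpace ℝ (Fin N) → ℝ}
    {us vs : EuclideanSpace ℝ (Fin N) → ℝ} (hu : Lim R K u us) (hv : Lim R K' v vs)
    (y : EuclideanSpace ℝ (Fin N)) :
    |FF q a c y (us y) (vs y)| ≤ |Q * R ^ 2 + a * (-(K * R ^ 2)) + c * (-(K' * R ^ 2))| + 1 := by
  by_cases hy : y ∈ closedBall (0 : EuclideanSpace ℝ (Fin N)) R
  · have h1 := hu.2.2.2.1 y hy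
    have h2 := hv.2.2.2.1 y hy
    have := h.Fb hy h1.1 h1.2 h2.1 h2.2
    linarith [le_abs_self (Q * R ^ 2 + a * (-(K * R ^ 2)) + c * (-(K' * R ^ 2)))]
  · rw [hu.2.2.1 y hy]
    simp [FF]
    positivity

lemma Par.c1 (h : Par N R q a c Q K K' l) {u v : ℕ → EuclideanSpace ℝ (Fin N) → ℝ}
    {us vs : EuclideanSpace ℝ (Fin N) → ℝ} (hu : Lim R K u us) (hv : Lim R K' v vs)
    (hW : ∀ n, W R (u (n + 1)) (GG q a c l (u n) (v n) (u (n + 1)))) :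
    ContDiffOn ℝ 1 us (ball 0 R) :=
  reg1 (h.rep hu hv hW) hu.2.1 (FF_meas h.hq hu.2.1 hv.2.1)
    (fun y => (hu.bd y).trans (le_add_of_nonneg_left (abs_nonneg _))) (h.FFbd hu hv)

lemma Par.c2 (h : Par N R q a c Q K K' l) {u v : ℕ → EuclideanSpace ℝ (Fin N) → ℝ}
    {us vs : EuclideanSpace ℝ (Fin N) → ℝ} (hu : Lim R K u us) (hv : Lim R K' v vs)
    (hW : ∀ n, W R (u (n + 1)) (GG q a c l (u n) (v n) (u (n + 1))))
    (hu1 : ContDiffOn ℝ 1 us (ball 0 R)) (hv1 : ContDiffOn ℝ 1 vs (ball 0 R)) :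
    ContDiffOn ℝ 2 us (ball 0 R) ∧
    ∀ x ∈ ball (0 : EuclideanSpace ℝ (Fin N)) R, laplacian us x = FF q a c x (us x) (vs x) := by
  have hup : ∀ x ∈ ball (0 : EuclideanSpace ℝ (Fin N)) R, us x ≠ 0 := fun x hx =>
    ((dd_pos K R x).trans_le (hu.2.2.2.1 x (ball_subset_closedBall hx)).1).ne'
  have hvp : ∀ x ∈ ball (0 : EuclideanSpace ℝ (Fin N)) R, vs x ≠ 0 := fun x hx =>
    ((dd_pos K' R x).trans_le (hv.2.2.2.1 x (ball_subset_closedBall hx)).1).ne'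
  have h2 : ContDiffOn ℝ 2 us (ball 0 R) := by
    refine reg2 (h.rep hu hv hW) hu.2.1 (FF_meas h.hq hu.2.1 hv.2.1)
      (fun y => (hu.bd y).trans (le_add_of_nonneg_left (abs_nonneg _))) (h.FFbd hu hv) ?_
    intro x0 hx0
    have cu := hu1.contDiffAt (isOpen_ball.mem_nhds hx0)
    have cv := hv1.contDiffAt (isOpen_ball.mem_nhds hx0)
    have ch : ContDiffAt ℝ 1 (fun x => us x * (a * Real.log (us x) - c * Real.log (vs x))) x0 :=
      cu.mul ((contDiffAt_const.mul (cu.log (hup x0 hx0))).sub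
        (contDiffAt_const.mul (cv.log (hvp x0 hx0))))
    obtain ⟨L1, t1, ht1, hL1⟩ := ch.exists_lipschitzOnWith
    obtain ⟨L2, t2, ht2, hL2⟩ := cu.exists_lipschitzOnWith
    obtain ⟨L3, t3, ht3, hL3⟩ := h.hlq x0
    obtain ⟨r, hr, hrs⟩ := Metric.mem_nhds_iff.1
      (Filter.inter_mem (Filter.inter_mem ht1 ht2) (Filter.inter_mem ht3 (isOpen_ball.mem_nhds hx0)))
    have hQR : 0 ≤ Q * R ^ 2 := mul_nonneg h.hQ (sq_nonneg R)
    refine ⟨L1 + L2 * (Q * R ^ 2) + L3, r, by positivity, hr, fun y hy y' hy' => ?_⟩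
    have m := hrs hy
    have m' := hrs hy'
    have b1 := hL1.norm_sub_le m.1.1 m'.1.1
    have b2 := hL2.norm_sub_le m.1.2 m'.1.2
    have b3 := hL3.norm_sub_le m.2.1 m'.2.1
    have b4 := hu.bd y'
    have b5 : |q y| ≤ Q * R ^ 2 := by
      rw [abs_of_nonneg (h.hq0 y)]
      exact h.qb (ball_subset_closedBall m.2.2)
    rw [Real.norm_eq_abs] at b1 b2 b3
    have e : FF q a c y (us y) (vs y) - FF q a c y' (us y') (vs y') =
        (us y * (a * Real.log (us y) - c * Real.log (vs y)) -
          us y' * (a * Real.log (us y') - c * Real.log (vs y'))) +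
        ((us y - us y') * q y + us y' * (q y - q y')) := by unfold FF; ring
    rw [e]
    refine (abs_add_le _ _).trans ?_
    have e1 : |(us y - us y') * q y + us y' * (q y - q y')| ≤
        L2 * ‖y - y'‖ * (Q * R ^ 2) + 1 * (L3 * ‖y - y'‖) := by
      refine (abs_add_le _ _).trans ?_
      rw [abs_mul, abs_mul]
      gcongr
    linarith
  refine ⟨h2, fun x hx => rep_lap (h.rep hu hv hW) h2 (FF_cont h.hq h2.continuousOn hv1.continuousOn
    (fun x hx => (dd_pos K R x).trans_le (hu.2.2.2.1 x (ball_subset_closedBall hx)).1)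
    (fun x hx => (dd_pos K' R x).trans_le (hv.2.2.2.1 x (ball_subset_closedBall hx)).1)) hx⟩

lemma Lim.sph {u : ℕ → EuclideanSpace ℝ (Fin N) → ℝ} {us : EuclideanSpace ℝ (Fin N) → ℝ}
    (hu : Lim R K u us) : ∀ x ∈ sphere (0 : EuclideanSpace ℝ (Fin N)) R, us x = 1 := by
  intro x hx
  have := hu.2.2.2.1 x (sphere_subset_closedBall hx)
  rw [dd_sphere hx] at this
  linarith

lemma Lim.cont {u : ℕ → EuclideanSpace ℝ (Fin N) → ℝ} {us : EuclideanSpace ℝ (Fin N) → ℝ}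
    (hu : Lim R K u us) (hc : ContinuousOn us (ball 0 R)) : ContinuousOn us (closedBall 0 R) := by
  intro x hx
  by_cases hb : x ∈ ball (0 : EuclideanSpace ℝ (Fin N)) R
  · exact (hc.continuousAt (isOpen_ball.mem_nhds hb)).continuousWithinAt
  · have hs : x ∈ sphere (0 : EuclideanSpace ℝ (Fin N)) R := by
      rw [mem_closedBall] at hx
      rw [mem_ball, not_lt] at hb
      exact le_antisymm hx hb
    have hd : Continuous (dd (N := N) K R) := (contDiff_expq K R).continuous
    unfold ContinuousWithinAt
    rw [hu.sph x hs]
    refine tendsto_of_tendsto_of_tendsto_of_le_of_le' (g := dd K R) (h := fun _ => 1) ?_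
      tendsto_const_nhds ?_ ?_
    · have := hd.continuousAt.tendsto.mono_left (nhdsWithin_le_nhds (a := x) (s := closedBall 0 R))
      rwa [dd_sphere hs] at this
    · filter_upwards [self_mem_nhdsWithin] with y hy using (hu.2.2.2.1 y hy).1
    · filter_upwards [self_mem_nhdsWithin] with y hy using (hu.2.2.2.1 y hy).2

lemma system_main {q' : EuclideanSpace ℝ (Fin N) → ℝ} {a' c' Q' l' : ℝ} (h : Par N R q a c Q K K' l)
    (h' : Par N R q' a' c' Q' K' K l') :
    ∃ u v : EuclideanSpace ℝ (Fin N) → ℝ,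
      ContDiffOn ℝ 2 u (ball 0 R) ∧ ContDiffOn ℝ 2 v (ball 0 R) ∧
      ContinuousOn u (closedBall 0 R) ∧ ContinuousOn v (closedBall 0 R) ∧
      (∀ x ∈ ball (0 : EuclideanSpace ℝ (Fin N)) R,
        laplacian u x = FF q a c x (u x) (v x) ∧ laplacian v x = FF q' a' c' x (v x) (u x)) ∧
      (∀ x ∈ sphere (0 : EuclideanSpace ℝ (Fin N)) R, u x = 1 ∧ v x = 1) ∧
      (∀ x ∈ closedBall (0 : EuclideanSpace ℝ (Fin N)) R,
        dd K R x ≤ u x ∧ u x ≤ 1 ∧ dd K' R x ≤ v x ∧ v x ≤ 1) := by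
  let T := {p : (EuclideanSpace ℝ (Fin N) → ℝ) × (EuclideanSpace ℝ (Fin N) → ℝ) //
    Bas R K p.1 ∧ Bas R K' p.2 ∧ Sup R q a c p.1 p.2 ∧ Sup R q' a' c' p.2 p.1}
  have hstep : ∀ p : T, ∃ p' : T,
      (∀ x ∈ closedBall (0 : EuclideanSpace ℝ (Fin N)) R, p'.1.1 x ≤ p.1.1 x) ∧
      (∀ x ∈ closedBall (0 : EuclideanSpace ℝ (Fin N)) R, p'.1.2 x ≤ p.1.2 x) ∧
      W R p'.1.1 (GG q a c l p.1.1 p.1.2 p'.1.1) ∧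
      W R p'.1.2 (GG q' a' c' l' p.1.2 p.1.1 p'.1.2) := by
    rintro ⟨⟨u, v⟩, hu, hv, hs, hs'⟩
    obtain ⟨u', b1, b2, b3⟩ := h.step hu hv hs
    obtain ⟨v', b1', b2', b3'⟩ := h'.step hv hu hs'
    exact ⟨⟨(u', v'), b1, b1', h.sup hu b1 b1' hv b2 b2' b3, h'.sup hv b1' b1 hu b2' b2 b3'⟩,
      b2, b2', b3, b3'⟩
  choose S hS using hstep
  let p0 : T := ⟨(Set.indicator (closedBall (0 : EuclideanSpace ℝ (Fin N)) R) 1,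
    Set.indicator (closedBall (0 : EuclideanSpace ℝ (Fin N)) R) 1), Bas_one h.hK, Bas_one h'.hK,
    Sup_one h.hq0, Sup_one h'.hq0⟩
  let P : ℕ → T := fun n => Nat.rec p0 (fun _ p => S p) n
  have hP : ∀ n, P (n + 1) = S (P n) := fun n => rfl
  obtain ⟨us, hus⟩ := exists_lim (u := fun n => (P n).1.1) (fun n => (P n).2.1)
    (fun n => (hS (P n)).1)
  obtain ⟨vs, hvs⟩ := exists_lim (u := fun n => (P n).1.2) (fun n => (P n).2.2.1)
    (fun n => (hS (P n)).2.1)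
  have w1 := h.c1 hus hvs (fun n => (hS (P n)).2.2.1)
  have w2 := h'.c1 hvs hus (fun n => (hS (P n)).2.2.2)
  obtain ⟨r1, r2⟩ := h.c2 hus hvs (fun n => (hS (P n)).2.2.1) w1 w2
  obtain ⟨r1', r2'⟩ := h'.c2 hvs hus (fun n => (hS (P n)).2.2.2) w2 w1
  exact ⟨us, vs, r1, r1', hus.cont r1.continuousOn, hvs.cont r1'.continuousOn,
    fun x hx => ⟨r2 x hx, r2' x hx⟩, fun x hx => ⟨hus.sph x hx, hvs.sph x hx⟩,
    fun x hx => ⟨(hus.2.2.2.1 x hx).1, (hus.2.2.2.1 x hx).2, hvs.2.2.2.1 x hx⟩⟩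

end
end TS
end

/-- Existence part of the main theorem for the logarithmically transformed system: a solution
`(u₁, u₂)` with boundary value `1`, sandwiched between the sub-solution pair
`(exp(K₁(R²−‖x‖²)), exp(K₂(R²−‖x‖²)))` and the super-solution pair `(1, 1)`. -/
theorem transformed_system_exists (N : ℕ) (hN : 0 < N) (R : ℝ) (hR : 0 < R)
    (a₁ α₁ a₂ α₂ σ₁ σ₂ M₁ M₂ : ℝ)
    (ha₁ : 0 < a₁) (hα₁ : 0 < α₁) (ha₂ : 0 < a₂) (hα₂ : 0 < α₂)
    (hσ₁ : 0 < σ₁) (hσ₂ : 0 < σ₂) (hM₁ : 0 < M₁) (hM₂ : 0 < M₂)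
    (f₁ f₂ : EuclideanSpace ℝ (Fin N) → ℝ)
    (hf₁c : Continuous f₁) (hf₂c : Continuous f₂)
    (hf₁cv : ConvexOn ℝ Set.univ f₁) (hf₂cv : ConvexOn ℝ Set.univ f₂)
    (hf₁b : ∀ x, 0 ≤ f₁ x ∧ f₁ x ≤ M₁ * ‖x‖ ^ 2)
    (hf₂b : ∀ x, 0 ≤ f₂ x ∧ f₂ x ≤ M₂ * ‖x‖ ^ 2)
    (K₁ K₂ : ℝ) (hK₁ : K₁ < 0) (hK₂ : K₂ < 0)
    (heq₁ : 4 * K₁ ^ 2 + (2 * (a₁ + α₁) * σ₁ ^ 2 / σ₁ ^ 4) * K₁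
      - M₁ / σ₁ ^ 4 - (2 * a₁ * σ₂ ^ 2 / σ₁ ^ 4) * K₂ = 0)
    (heq₂ : 4 * K₂ ^ 2 + (2 * (a₂ + α₂) * σ₂ ^ 2 / σ₂ ^ 4) * K₂
      - M₂ / σ₂ ^ 4 - (2 * a₂ * σ₁ ^ 2 / σ₂ ^ 4) * K₁ = 0)
    (hineq₁ : -(2 * (a₁ + α₁) * R ^ 2 / σ₁ ^ 2) * K₁ - 2 * K₁ * (N : ℝ)
      + (2 * a₁ * σ₂ ^ 2 * R ^ 2 / σ₁ ^ 4) * K₂ ≥ 0)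
    (hineq₂ : -(2 * (a₂ + α₂) * R ^ 2 / σ₂ ^ 2) * K₂ - 2 * (N : ℝ) * K₂
      + (2 * a₂ * σ₁ ^ 2 * R ^ 2 / σ₂ ^ 4) * K₁ ≥ 0) :
    ∃ u₁ u₂ : EuclideanSpace ℝ (Fin N) → ℝ,
      ContDiffOn ℝ 2 u₁ (ball (0 : EuclideanSpace ℝ (Fin N)) R) ∧
      ContDiffOn ℝ 2 u₂ (ball (0 : EuclideanSpace ℝ (Fin N)) R) ∧
      ContinuousOn u₁ (closedBall (0 : EuclideanSpace ℝ (Fin N)) R) ∧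
      ContinuousOn u₂ (closedBall (0 : EuclideanSpace ℝ (Fin N)) R) ∧
      (∀ x ∈ ball (0 : EuclideanSpace ℝ (Fin N)) R,
        laplacian u₁ x = u₁ x * (f₁ x / σ₁ ^ 4 + 2 * (a₁ + α₁) / σ₁ ^ 2 * Real.log (u₁ x)
          - 2 * a₁ * σ₂ ^ 2 / σ₁ ^ 4 * Real.log (u₂ x)) ∧
        laplacian u₂ x = u₂ x * (f₂ x / σ₂ ^ 4 + 2 * (a₂ + α₂) / σ₂ ^ 2 * Real.log (u₂ x)
          - 2 * a₂ * σ₁ ^ 2 / σ₂ ^ 4 * Real.log (u₁ x))) ∧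
      (∀ x ∈ sphere (0 : EuclideanSpace ℝ (Fin N)) R, u₁ x = 1 ∧ u₂ x = 1) ∧
      (∀ x ∈ closedBall (0 : EuclideanSpace ℝ (Fin N)) R,
        Real.exp (K₁ * (R ^ 2 - ‖x‖ ^ 2)) ≤ u₁ x ∧ u₁ x ≤ 1 ∧
        Real.exp (K₂ * (R ^ 2 - ‖x‖ ^ 2)) ≤ u₂ x ∧ u₂ x ≤ 1) := by
  have hs1 : σ₁ ≠ 0 := hσ₁.ne'
  have hs2 : σ₂ ≠ 0 := hσ₂.ne'
  have hll : ∀ (f : EuclideanSpace ℝ (Fin N) → ℝ) (σ : ℝ), ConvexOn ℝ Set.univ f → 0 < σ →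
      LocallyLipschitz (fun x => f x / σ ^ 4) := by
    intro f σ hf hσ
    have h1 : ConvexOn ℝ Set.univ (fun x => f x / σ ^ 4) := by
      have h2 := hf.smul (show (0:ℝ) ≤ (σ ^ 4)⁻¹ by positivity)
      have h3 : (fun x => f x / σ ^ 4) = fun x => (σ ^ 4)⁻¹ • f x := by
        ext x; rw [smul_eq_mul, div_eq_inv_mul]
      rw [h3]
      exact h2
    exact locallyLipschitzOn_univ.1 (h1.locallyLipschitzOn isOpen_univ)
  have e1 : 2 * (a₁ + α₁) * σ₁ ^ 2 / σ₁ ^ 4 = 2 * (a₁ + α₁) / σ₁ ^ 2 := by field_simp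
  have e2 : 2 * (a₂ + α₂) * σ₂ ^ 2 / σ₂ ^ 4 = 2 * (a₂ + α₂) / σ₂ ^ 2 := by field_simp
  have p1 : TS.Par N R (fun x => f₁ x / σ₁ ^ 4) (2 * (a₁ + α₁) / σ₁ ^ 2)
      (2 * a₁ * σ₂ ^ 2 / σ₁ ^ 4) (M₁ / σ₁ ^ 4) K₁ K₂ _ :=
    { hN := hN, hR := hR, hq := hf₁c.div_const _
      hq0 := fun x => div_nonneg (hf₁b x).1 (by positivity)
      hq1 := fun x => by
        rw [div_mul_eq_mul_div]
        exact div_le_div_of_nonneg_right (hf₁b x).2 (by positivity)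
      hlq := hll f₁ σ₁ hf₁cv hσ₁
      hQ := by positivity
      ha := by positivity
      hc := by positivity
      hK := hK₁, hK' := hK₂
      heq := by rw [← e1]; exact heq₁
      hineq := by
        refine le_of_le_of_eq hineq₁ ?_
        ring
      hl := le_refl _ }
  have p2 : TS.Par N R (fun x => f₂ x / σ₂ ^ 4) (2 * (a₂ + α₂) / σ₂ ^ 2)
      (2 * a₂ * σ₁ ^ 2 / σ₂ ^ 4) (M₂ / σ₂ ^ 4) K₂ K₁ _ :=
    { hN := hN, hR := hR, hq := hf₂c.div_const _
      hq0 := fun x => div_nonneg (hf₂b x).1 (by positivity)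
      hq1 := fun x => by
        rw [div_mul_eq_mul_div]
        exact div_le_div_of_nonneg_right (hf₂b x).2 (by positivity)
      hlq := hll f₂ σ₂ hf₂cv hσ₂
      hQ := by positivity
      ha := by positivity
      hc := by positivity
      hK := hK₂, hK' := hK₁
      heq := by rw [← e2]; exact heq₂
      hineq := by
        refine le_of_le_of_eq hineq₂ ?_
        ring
      hl := le_refl _ }
  exact TS.system_main p1 p2
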